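/- For every 1 < q < +∞ there exists a constant C_q > 0 such that for every divergence-free Schwartz vector field u : ℝ³ → ℝ³ (i.e. each component of u is a Schwartz function and ∇·u = 0), with vorticity ω = ∇ × u, one has ‖∇u₃‖_{L^q} + ‖∂₃u‖_{L^q} ≤ C_q ‖e₃ × ω‖_{L^q}. -/

import Mathlib

open MeasureTheory

noncomputable section

/-- The standard basis vectors of `EuclideanSpace ℝ (Fin 3)`. -/
def ee (i : Fin 3) : EuclideanSpace ℝ (Fin 3) := EuclideanSpace.single i 1

/-- The partial derivative `∂ᵢ uⱼ` of a vector field given by its three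
(Schwartz) components. -/
def pdW (u : Fin 3 → SchwartzMap (EuclideanSpace ℝ (Fin 3)) ℝ) (i j : Fin 3)
    (x : EuclideanSpace ℝ (Fin 3)) : ℝ :=
  fderiv ℝ (u j) x (ee i)

/-- View a triple of reals as a vector in `ℝ³` with the Euclidean norm. -/
def toE3 (f : Fin 3 → ℝ) : EuclideanSpace ℝ (Fin 3) :=
  (WithLp.equiv 2 (Fin 3 → ℝ)).symm f

/-- The vorticity `ω = ∇ × u` (with 0-based indices). -/
def vortW (u : Fin 3 → SchwartzMap (EuclideanSpace ℝ (Fin 3)) ℝ)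
    (x : EuclideanSpace ℝ (Fin 3)) : Fin 3 → ℝ :=
  ![pdW u 1 2 x - pdW u 2 1 x, pdW u 2 0 x - pdW u 0 2 x, pdW u 0 1 x - pdW u 1 0 x]

/-- The cross product in `ℝ³`. -/
def cross (a b : Fin 3 → ℝ) : Fin 3 → ℝ :=
  ![a 1 * b 2 - a 2 * b 1, a 2 * b 0 - a 0 * b 2, a 0 * b 1 - a 1 * b 0]

/-!
The `k`-th component of `e₃ × ω` is `vₖ = ∂ₖu₃ - ∂₃uₖ`, and `∇·u = 0` gives `Δu₃ = ∑ₖ ∂ₖvₖ`. So it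
suffices to bound `‖∇φ‖_{L^p}` by `‖v‖_{L^p}` whenever `Δφ = ∑ₖ ∂ₖvₖ`, which is done without
singular integrals. Along the heat flow `P_t = e^{tΔ/2}` one has
`∫ ∂ᵢφ g = ∫₀^∞ ∫ P_tΔφ P_t∂ᵢg dx dt`, which the equation for `φ` turns into
`∑ₖ ∫₀^∞ ∫ P_t∂ₖvₖ P_t∂ᵢg dx dt`. The bilinear embedding theorem bounds the latter by a multiple of
`∑ₖ ‖vₖ‖_{L^p} ‖g‖_{L^q}`, `1/p + 1/q = 1`: if `B` is a function of two variables of size at most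
`|x|^p + |y|^q` whose Hessian controls `|ξ| |η|` (a Bellman function of Nazarov-Treil type), then
`-d/dt ∫ B(P_t vₖ, P_t g)` dominates `∫ |P_t∂ₖvₖ| |P_t∂ᵢg|`. Duality concludes.
-/

open SchwartzMap LineDeriv Laplacian Real Filter Topology

section Heat

variable {E V : Type*} [NormedAddCommGroup E] [InnerProductSpace ℝ E]
  [NormedAddCommGroup V] [NormedSpace ℝ V]

/-- The density of the standard Gaussian measure on a Euclidean space. -/
def gaussDensity (z : E) : ℝ :=
  ((2 * π) ^ ((Module.finrank ℝ E : ℝ) / 2))⁻¹ * rexp (-(1 / 2) * ‖z‖ ^ 2)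

lemma gaussDensity_nonneg (z : E) : 0 ≤ gaussDensity z := by
  unfold gaussDensity; positivity

lemma gaussDensity_le (z : E) : gaussDensity z ≤ gaussDensity (0 : E) := by
  unfold gaussDensity
  refine mul_le_mul_of_nonneg_left (exp_le_exp.2 ?_) (by positivity)
  simp

@[fun_prop]
lemma continuous_gaussDensity : Continuous (gaussDensity : E → ℝ) := by
  unfold gaussDensity; fun_prop

lemma norm_gaussDensity_smul (z : E) (a : V) : ‖gaussDensity z • a‖ = gaussDensity z * ‖a‖ := by
  rw [norm_smul, norm_of_nonneg (gaussDensity_nonneg z)]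

lemma hasLineDerivAt_gaussDensity (z v : E) :
    HasLineDerivAt ℝ gaussDensity (-(gaussDensity z * inner ℝ v z)) z v := by
  have hline : HasDerivAt (fun s : ℝ => z + s • v) v 0 := by
    simpa using ((hasDerivAt_id (0 : ℝ)).smul_const v).const_add z
  refine ((hline.norm_sq.const_mul (-(1 / 2) : ℝ)).exp.const_mul
    ((2 * π) ^ ((Module.finrank ℝ E : ℝ) / 2))⁻¹).congr_deriv ?_
  simp only [gaussDensity, zero_smul, add_zero, real_inner_comm z v]
  ring

variable [FiniteDimensional ℝ E] [MeasurableSpace E] [BorelSpace E]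

lemma integrable_exp_neg_mul_sq_norm {b : ℝ} (hb : 0 < b) :
    Integrable (fun z : E => rexp (-b * ‖z‖ ^ 2)) := by
  refine (GaussianFourier.integrable_cexp_neg_mul_sq_norm_add (V := E) (b := (b : ℂ))
    (by simpa using hb) 0 0).norm.congr (Eventually.of_forall fun z => ?_)
  simp [Complex.norm_exp, ← Complex.ofReal_pow]

lemma integrable_gaussDensity : Integrable (gaussDensity : E → ℝ) :=
  (integrable_exp_neg_mul_sq_norm (by norm_num)).const_mul _

lemma integral_gaussDensity : ∫ z : E, gaussDensity z = 1 := by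
  unfold gaussDensity
  rw [integral_const_mul, GaussianFourier.integral_rexp_neg_mul_sq_norm (by norm_num),
    div_div_eq_mul_div, div_one, mul_comm π]
  exact inv_mul_cancel₀ (by positivity)

lemma integrable_norm_mul_gaussDensity : Integrable (fun z : E => ‖z‖ * gaussDensity z) := by
  set c : ℝ := ((2 * π) ^ ((Module.finrank ℝ E : ℝ) / 2))⁻¹
  have : 0 ≤ c := by positivity
  refine ((integrable_exp_neg_mul_sq_norm (E := E) (b := 1 / 4) (by norm_num)).const_mul
    (2 * c)).mono' (by fun_prop) (Eventually.of_forall fun z => ?_)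
  have hz : ‖z‖ ≤ 2 * rexp (1 / 4 * ‖z‖ ^ 2) := by
    nlinarith [add_one_le_exp (1 / 4 * ‖z‖ ^ 2), sq_nonneg (‖z‖ - 1)]
  calc ‖‖z‖ * gaussDensity z‖ = ‖z‖ * (c * rexp (-(1 / 2) * ‖z‖ ^ 2)) :=
        norm_of_nonneg (mul_nonneg (norm_nonneg z) (gaussDensity_nonneg z))
    _ ≤ 2 * rexp (1 / 4 * ‖z‖ ^ 2) * (c * rexp (-(1 / 2) * ‖z‖ ^ 2)) := by gcongr
    _ = 2 * c * (rexp (1 / 4 * ‖z‖ ^ 2) * rexp (-(1 / 2) * ‖z‖ ^ 2)) := by ring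
    _ = 2 * c * rexp (-(1 / 4) * ‖z‖ ^ 2) := by rw [← Real.exp_add]; ring_nf

lemma integrable_gaussDensity_smul {g : E → V} (hg : Continuous g) {M : ℝ}
    (hM : ∀ z, ‖g z‖ ≤ M) : Integrable (fun z => gaussDensity z • g z) :=
  integrable_gaussDensity.smul_bdd M hg.aestronglyMeasurable (Eventually.of_forall hM)

lemma integrable_gaussDensity_smul_of_le_norm {g : E → V} (hg : Continuous g) {M : ℝ}
    (hM : ∀ z, ‖g z‖ ≤ M * ‖z‖) : Integrable (fun z => gaussDensity z • g z) := by
  refine (integrable_norm_mul_gaussDensity.const_mul M).mono' (by fun_prop)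
    (Eventually.of_forall fun z => ?_)
  rw [norm_gaussDensity_smul, mul_comm, ← mul_assoc]
  exact mul_le_mul_of_nonneg_right (hM z) (gaussDensity_nonneg z)

/-- The heat semigroup with generator `Δ / 2`, so that `heat t f x` is the expectation of
`f (x + √t Z)` for a standard Gaussian vector `Z`. -/
def heat (t : ℝ) (f : E → V) (x : E) : V := ∫ z, gaussDensity z • f (x + √t • z)

lemma integrable_heat_integrand (f : 𝓢(E, V)) (t : ℝ) (x : E) :
    Integrable (fun z => gaussDensity z • f (x + √t • z)) :=
  integrable_gaussDensity_smul (by fun_prop) fun _ => f.norm_le_seminorm ℝ _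

lemma heat_sum {ι : Type*} (s : Finset ι) (f : ι → 𝓢(E, V)) (t : ℝ) (x : E) :
    heat t (∑ i ∈ s, f i : 𝓢(E, V)) x = ∑ i ∈ s, heat t (f i) x := by
  simp only [heat, _root_.sum_apply, Finset.smul_sum]
  exact integral_finsetSum _ fun i _ => integrable_heat_integrand (f i) t x

lemma heat_smul (c t : ℝ) (f : 𝓢(E, V)) (x : E) : heat t (c • f : 𝓢(E, V)) x = c • heat t f x := by
  simp only [heat, smul_apply, smul_comm _ c, integral_smul]

lemma norm_heat_le (f : 𝓢(E, V)) (t : ℝ) (x : E) : ‖heat t f x‖ ≤ SchwartzMap.seminorm ℝ 0 0 f := by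
  calc ‖heat t f x‖ ≤ ∫ z : E, gaussDensity z * SchwartzMap.seminorm ℝ 0 0 f := by
        refine norm_integral_le_of_norm_le (integrable_gaussDensity.mul_const _)
          (Eventually.of_forall fun z => ?_)
        rw [norm_gaussDensity_smul]
        exact mul_le_mul_of_nonneg_left (f.norm_le_seminorm ℝ _) (gaussDensity_nonneg z)
    _ = SchwartzMap.seminorm ℝ 0 0 f := by
        rw [integral_mul_const, integral_gaussDensity, one_mul]

lemma continuous_heat (f : 𝓢(E, V)) : Continuous fun p : ℝ × E => heat p.1 f p.2 := by
  refine continuous_of_dominated (bound := fun z => gaussDensity z * SchwartzMap.seminorm ℝ 0 0 f)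
    (fun p => (integrable_heat_integrand f p.1 p.2).aestronglyMeasurable)
    (fun p => Eventually.of_forall fun z => ?_)
    (integrable_gaussDensity.mul_const _) (Eventually.of_forall fun z => by fun_prop)
  rw [norm_gaussDensity_smul]
  exact mul_le_mul_of_nonneg_left (f.norm_le_seminorm ℝ _) (gaussDensity_nonneg z)

lemma continuous_heat_left (f : 𝓢(E, V)) (x : E) : Continuous fun t => heat t f x :=
  (continuous_heat f).comp (by fun_prop : Continuous fun t : ℝ => (t, x))

lemma continuous_heat_right (f : 𝓢(E, V)) (t : ℝ) : Continuous (heat t f) :=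
  (continuous_heat f).comp (by fun_prop : Continuous fun x : E => (t, x))

lemma integrable_prod_heat_integrand (f : 𝓢(E, V)) (t : ℝ) :
    Integrable (fun p : E × E => gaussDensity p.2 • f (p.1 + √t • p.2)) (volume.prod volume) := by
  have hc : Continuous (fun p : E × E => gaussDensity p.2 • f (p.1 + √t • p.2)) := by fun_prop
  rw [integrable_prod_iff' hc.aestronglyMeasurable]
  refine ⟨Eventually.of_forall fun z =>
    ((f.integrable (μ := volume)).comp_add_right (√t • z)).smul (gaussDensity z), ?_⟩
  simpa only [norm_gaussDensity_smul, integral_const_mul,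
    integral_add_right_eq_self (fun x => ‖f x‖)] using
    (integrable_gaussDensity (E := E)).mul_const (∫ x, ‖f x‖)

lemma integrable_heat (f : 𝓢(E, V)) (t : ℝ) : Integrable (heat t f) :=
  (integrable_prod_heat_integrand f t).integral_prod_left

lemma integral_norm_heat_le (f : 𝓢(E, V)) (t : ℝ) : ∫ x, ‖heat t f x‖ ≤ ∫ x, ‖f x‖ := by
  have hi := integrable_prod_heat_integrand f t
  calc ∫ x, ‖heat t f x‖ ≤ ∫ x, ∫ z, ‖gaussDensity z • f (x + √t • z)‖ :=
        integral_mono (integrable_heat f t).norm hi.norm.integral_prod_left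
          fun x => norm_integral_le_integral_norm _
    _ = ∫ z : E, ∫ x, ‖gaussDensity z • f (x + √t • z)‖ := integral_integral_swap hi.norm
    _ = ∫ x, ‖f x‖ := by
        simp only [norm_gaussDensity_smul, integral_const_mul,
          integral_add_right_eq_self (fun x => ‖f x‖), integral_mul_const, integral_gaussDensity,
          one_mul]

lemma norm_heat_le_integral (f : 𝓢(E, V)) {t : ℝ} (ht : 0 < t) (x : E) :
    ‖heat t f x‖ ≤ gaussDensity (0 : E) * (∫ y, ‖f y‖) * (√t ^ Module.finrank ℝ E)⁻¹ := by
  have hf : Integrable (fun y : E => ‖f (x + y)‖) :=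
    ((f.integrable (μ := volume)).comp_add_left x).norm
  calc ‖heat t f x‖ ≤ ∫ z, gaussDensity (0 : E) * ‖f (x + √t • z)‖ := by
        refine norm_integral_le_of_norm_le
          ((hf.comp_smul (Real.sqrt_pos.2 ht).ne').const_mul (gaussDensity (0 : E)))
          (Eventually.of_forall fun z => ?_)
        rw [norm_gaussDensity_smul]
        exact mul_le_mul_of_nonneg_right (gaussDensity_le z) (norm_nonneg _)
    _ = gaussDensity (0 : E) * (∫ y, ‖f y‖) * (√t ^ Module.finrank ℝ E)⁻¹ := by
        rw [integral_const_mul, Measure.integral_comp_smul volume (fun y => ‖f (x + y)‖) (√t),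
          integral_add_left_eq_self (fun y => ‖f y‖), abs_of_nonneg (by positivity), smul_eq_mul]
        ring

lemma heat_zero [CompleteSpace V] (f : E → V) (x : E) : heat 0 f x = f x := by
  simp [heat, integral_smul_const, integral_gaussDensity]

lemma hasLineDerivAt_heat (f : 𝓢(E, V)) (t : ℝ) (x v : E) :
    HasLineDerivAt ℝ (heat t f) (heat t (∂_{v} f : 𝓢(E, V)) x) x v := by
  have hderiv := (hasDerivAt_integral_of_dominated_loc_of_deriv_le (μ := (volume : Measure E))
    (F := fun (s : ℝ) z => gaussDensity z • f (x + s • v + √t • z))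
    (F' := fun (s : ℝ) z => gaussDensity z • (∂_{v} f : 𝓢(E, V)) (x + s • v + √t • z))
    (x₀ := 0) (bound := fun z => gaussDensity z * SchwartzMap.seminorm ℝ 0 0 (∂_{v} f))
    (s := Set.univ) univ_mem
    (Eventually.of_forall fun s => (integrable_heat_integrand f t (x + s • v)).aestronglyMeasurable)
    (integrable_heat_integrand f t (x + (0 : ℝ) • v))
    (integrable_heat_integrand _ t (x + (0 : ℝ) • v)).aestronglyMeasurable
    (Eventually.of_forall fun z s _ => by
      rw [norm_gaussDensity_smul]
      exact mul_le_mul_of_nonneg_left (norm_le_seminorm ℝ _ _) (gaussDensity_nonneg z))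
    (integrable_gaussDensity.mul_const _)
    (Eventually.of_forall fun z s _ => by
      have hline : HasDerivAt (fun s : ℝ => x + s • v + √t • z) v s := by
        simpa using (((hasDerivAt_id s).smul_const v).const_add x).add_const (√t • z)
      exact ((f.hasFDerivAt _).comp_hasDerivAt s hline).const_smul (gaussDensity z))).2
  simp only [zero_smul, add_zero] at hderiv
  exact hderiv

lemma integrable_gaussDensity_smul_inner_smul (f : 𝓢(E, V)) (t : ℝ) (x v : E) :
    Integrable (fun z => gaussDensity z • inner ℝ v z • f (x + √t • z)) :=
  integrable_gaussDensity_smul_of_le_norm (M := SchwartzMap.seminorm ℝ 0 0 f * ‖v‖) (by fun_prop)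
    fun z => by
      rw [norm_smul, mul_comm, mul_assoc]
      exact mul_le_mul (f.norm_le_seminorm ℝ _) (norm_inner_le_norm v z) (norm_nonneg _)
        (apply_nonneg _ _)

/-- Stein's identity. -/
lemma integral_gaussDensity_smul_inner_smul (f : 𝓢(E, V)) (t : ℝ) (x v : E) :
    ∫ z, gaussDensity z • inner ℝ v z • f (x + √t • z) = √t • heat t (∂_{v} f : 𝓢(E, V)) x := by
  have hparts := integral_bilinear_hasLineDerivAt_right_eq_neg_left_of_integrable
    (μ := (volume : Measure E)) (B := ContinuousLinearMap.lsmul ℝ ℝ) (v := v)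
    (f := gaussDensity) (f' := fun z => -(gaussDensity z * inner ℝ v z))
    (g := fun z => f (x + √t • z)) (g' := fun z => √t • (∂_{v} f : 𝓢(E, V)) (x + √t • z))
    (by simpa [mul_smul] using
      (integrable_gaussDensity_smul_inner_smul f t x v).neg)
    ((integrable_heat_integrand (∂_{v} f) t x).smul √t |>.congr
      (Eventually.of_forall fun z => smul_comm ..))
    (by simpa using integrable_heat_integrand f t x)
    (fun z _ => hasLineDerivAt_gaussDensity z v)
    (fun z _ => by
      have hline : HasDerivAt (fun s : ℝ => x + √t • (z + s • v)) (√t • v) 0 := by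
        simpa using ((((hasDerivAt_id (0 : ℝ)).smul_const v).const_add z).const_smul √t).const_add x
      simpa [HasLineDerivAt, Function.comp_def, lineDerivOp_apply_eq_fderiv] using
        (f.hasFDerivAt _).comp_hasDerivAt (0 : ℝ) hline)
  simp only [ContinuousLinearMap.lsmul_apply, neg_smul, integral_neg, neg_neg, mul_smul] at hparts
  rw [← hparts, heat, ← integral_smul]
  exact integral_congr_ae (Eventually.of_forall fun z => smul_comm ..)

lemma hasDerivAt_heat_integral_fderiv (f : 𝓢(E, V)) {t : ℝ} (ht : 0 < t) (x : E) :
    HasDerivAt (fun s => heat s f x)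
      ((1 / (2 * √t)) • ∫ z, gaussDensity z • fderiv ℝ f (x + √t • z) z) t := by
  set M := SchwartzMap.seminorm ℝ 0 0 (SchwartzMap.fderivCLM ℝ E V f)
  have hM : ∀ y, ‖fderiv ℝ f y‖ ≤ M := (SchwartzMap.fderivCLM ℝ E V f).norm_le_seminorm ℝ
  have : 0 < √(t / 2) := Real.sqrt_pos.2 (by positivity)
  have hf' : Continuous (fderiv ℝ f) := (SchwartzMap.fderivCLM ℝ E V f).continuous
  refine ((hasDerivAt_integral_of_dominated_loc_of_deriv_le (μ := (volume : Measure E))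
    (F := fun (s : ℝ) z => gaussDensity z • f (x + √s • z))
    (F' := fun (s : ℝ) z => gaussDensity z • fderiv ℝ f (x + √s • z) ((1 / (2 * √s)) • z))
    (bound := fun z => M * (1 / (2 * √(t / 2))) * (‖z‖ * gaussDensity z))
    (Ioi_mem_nhds (half_lt_self ht))
    (Eventually.of_forall fun s => (integrable_heat_integrand f s x).aestronglyMeasurable)
    (integrable_heat_integrand f t x)
    (Continuous.aestronglyMeasurable (by fun_prop))
    (Eventually.of_forall fun z s (hs : t / 2 < s) => ?_)
    (integrable_norm_mul_gaussDensity.const_mul _)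
    (Eventually.of_forall fun z s (hs : t / 2 < s) => ?_)).2).congr_deriv ?_
  · rw [norm_gaussDensity_smul, mul_comm, ← mul_assoc]
    refine mul_le_mul_of_nonneg_right ((ContinuousLinearMap.le_opNorm _ _).trans ?_)
      (gaussDensity_nonneg z)
    rw [norm_smul, norm_of_nonneg (by positivity), ← mul_assoc]
    gcongr
    exact hM _
  · have hline : HasDerivAt (fun s : ℝ => x + √s • z) ((1 / (2 * √s)) • z) s :=
      ((Real.hasDerivAt_sqrt (by linarith)).smul_const z).const_add x
    exact ((f.hasFDerivAt _).comp_hasDerivAt s hline).const_smul _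
  · simp only [map_smul, smul_comm _ (1 / (2 * √t)), integral_smul]

lemma integral_gaussDensity_smul_fderiv (f : 𝓢(E, V)) (t : ℝ) (x : E) :
    ∫ z, gaussDensity z • fderiv ℝ f (x + √t • z) z = √t • heat t (Δ f : 𝓢(E, V)) x := by
  let b := stdOrthonormalBasis ℝ E
  have hexpand : ∀ z : E, gaussDensity z • fderiv ℝ f (x + √t • z) z =
      ∑ k, gaussDensity z • inner ℝ (b k) z • (∂_{b k} f : 𝓢(E, V)) (x + √t • z) := by
    intro z
    simp only [lineDerivOp_apply_eq_fderiv, ← map_smul, ← map_sum, ← Finset.smul_sum, b.sum_repr' z]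
  simp only [hexpand]
  rw [integral_finsetSum _ fun k _ => integrable_gaussDensity_smul_inner_smul _ t x (b k),
    laplacian_eq_sum b, heat_sum, Finset.smul_sum]
  exact Finset.sum_congr rfl fun k _ => integral_gaussDensity_smul_inner_smul _ t x (b k)

lemma hasDerivAt_heat (f : 𝓢(E, V)) {t : ℝ} (ht : 0 < t) (x : E) :
    HasDerivAt (fun s => heat s f x) ((1 / 2 : ℝ) • heat t (Δ f : 𝓢(E, V)) x) t := by
  refine (hasDerivAt_heat_integral_fderiv f ht x).congr_deriv ?_
  have hsqrt : √t ≠ 0 := (Real.sqrt_pos.2 ht).ne'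
  rw [integral_gaussDensity_smul_fderiv, smul_smul]
  congr 1
  field_simp

end Heat

section Flow

variable {E V W Z : Type*} [NormedAddCommGroup E] [InnerProductSpace ℝ E] [FiniteDimensional ℝ E]
  [MeasurableSpace E] [BorelSpace E] [NormedAddCommGroup V] [NormedSpace ℝ V]
  [NormedAddCommGroup W] [NormedSpace ℝ W] [NormedAddCommGroup Z] [NormedSpace ℝ Z]

variable (E) in
/-- Lebesgue measure on the space-time slab `(0, T] × E`. -/
abbrev slab (T : ℝ) : Measure (ℝ × E) := (volume.restrict (Set.Ioc 0 T)).prod volume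

lemma integrable_heat_slab (f : 𝓢(E, V)) (T : ℝ) :
    Integrable (fun p : ℝ × E => heat p.1 f p.2) (slab E T) := by
  have hm := (continuous_heat f).aestronglyMeasurable (μ := slab E T)
  refine (integrable_prod_iff hm).2 ⟨Eventually.of_forall fun t => integrable_heat f t, ?_⟩
  refine (integrable_const (∫ x, ‖f x‖)).mono' hm.norm.integral_prod_right'
    (Eventually.of_forall fun t => ?_)
  rw [norm_of_nonneg (integral_nonneg fun x => norm_nonneg _)]
  exact integral_norm_heat_le f t

lemma integrable_clm_apply_of_norm_le {X : Type*} [MeasurableSpace X] {μ : Measure X}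
    {φ : X → W →L[ℝ] Z} {g : X → W} (hφ : AEStronglyMeasurable φ μ) {C : ℝ}
    (hC : ∀ x, ‖φ x‖ ≤ C) (hg : Integrable g μ) : Integrable (fun x => φ x (g x)) μ :=
  (hg.norm.const_mul C).mono'
    ((ContinuousLinearMap.id ℝ (W →L[ℝ] Z)).aestronglyMeasurable_comp₂ hφ hg.aestronglyMeasurable)
    (Eventually.of_forall fun x =>
      ((φ x).le_opNorm _).trans (mul_le_mul_of_nonneg_right (hC x) (norm_nonneg _)))

variable [ProperSpace V]

lemma exists_norm_comp_heat_le {X : Type*} [NormedAddCommGroup X] {Φ : V → X}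
    (hΦ : Continuous Φ) (f : 𝓢(E, V)) :
    ∃ C, ∀ t x, ‖Φ (heat t f x)‖ ≤ C := by
  obtain ⟨C, hC⟩ := (isCompact_closedBall (0 : V) (SchwartzMap.seminorm ℝ 0 0 f)
    ).exists_bound_of_continuousOn hΦ.continuousOn
  exact ⟨C, fun t x => hC _ (mem_closedBall_zero_iff.2 (norm_heat_le f t x))⟩

lemma integrable_comp_heat_apply {Φ : V → W →L[ℝ] Z} (hΦ : Continuous Φ) (f : 𝓢(E, V))
    (g : 𝓢(E, W)) (t : ℝ) : Integrable (fun x => Φ (heat t f x) (heat t g x)) :=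
  have ⟨_, hC⟩ := exists_norm_comp_heat_le hΦ f
  integrable_clm_apply_of_norm_le
    (hΦ.comp (continuous_heat_right f t)).aestronglyMeasurable (hC t) (integrable_heat g t)

lemma integrable_comp_heat_apply_slab {Φ : V → W →L[ℝ] Z} (hΦ : Continuous Φ) (f : 𝓢(E, V))
    (g : 𝓢(E, W)) (T : ℝ) :
    Integrable (fun p : ℝ × E => Φ (heat p.1 f p.2) (heat p.1 g p.2)) (slab E T) :=
  have ⟨_, hC⟩ := exists_norm_comp_heat_le hΦ f
  integrable_clm_apply_of_norm_le (hΦ.comp (continuous_heat f)).aestronglyMeasurable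
    (fun p => hC p.1 p.2) (integrable_heat_slab g T)

lemma integrable_comp_heat_apply_apply {Φ : V → V →L[ℝ] W →L[ℝ] Z} (hΦ : Continuous Φ)
    (f g : 𝓢(E, V)) (h : 𝓢(E, W)) (t : ℝ) :
    Integrable (fun x => Φ (heat t f x) (heat t g x) (heat t h x)) := by
  obtain ⟨C, hC⟩ := exists_norm_comp_heat_le (X := V →L[ℝ] W →L[ℝ] Z) hΦ f
  refine integrable_clm_apply_of_norm_le (C := C * SchwartzMap.seminorm ℝ 0 0 g)
    ((hΦ.comp (continuous_heat_right f t)).clm_apply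
      (continuous_heat_right g t)).aestronglyMeasurable (fun x => ?_) (integrable_heat h t)
  exact (Φ _).le_of_opNorm_le_of_le (hC t x) (norm_heat_le g t x)

lemma integrable_comp_heat_apply_apply_slab {Φ : V → V →L[ℝ] W →L[ℝ] Z} (hΦ : Continuous Φ)
    (f g : 𝓢(E, V)) (h : 𝓢(E, W)) (T : ℝ) :
    Integrable (fun p : ℝ × E => Φ (heat p.1 f p.2) (heat p.1 g p.2) (heat p.1 h p.2))
      (slab E T) := by
  obtain ⟨C, hC⟩ := exists_norm_comp_heat_le (X := V →L[ℝ] W →L[ℝ] Z) hΦ f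
  refine integrable_clm_apply_of_norm_le (C := C * SchwartzMap.seminorm ℝ 0 0 g)
    ((hΦ.comp (continuous_heat f)).clm_apply (continuous_heat g)).aestronglyMeasurable
    (fun p => ?_) (integrable_heat_slab h T)
  exact (Φ _).le_of_opNorm_le_of_le (hC p.1 p.2) (norm_heat_le g p.1 p.2)

lemma integral_comp_heat_apply_lineDeriv {A : V → W →L[ℝ] Z} (hA : ContDiff ℝ 1 A) (f : 𝓢(E, V))
    (g : 𝓢(E, W)) (t : ℝ) (v : E) :
    ∫ x, A (heat t f x) (heat t (∂_{v} g : 𝓢(E, W)) x) =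
      -∫ x, fderiv ℝ A (heat t f x) (heat t (∂_{v} f : 𝓢(E, V)) x) (heat t g x) :=
  integral_bilinear_hasLineDerivAt_right_eq_neg_left_of_integrable
    (B := ContinuousLinearMap.id ℝ (W →L[ℝ] Z))
    (integrable_comp_heat_apply_apply (hA.continuous_fderiv one_ne_zero) f _ g t)
    (integrable_comp_heat_apply hA.continuous f _ t)
    (integrable_comp_heat_apply hA.continuous f g t)
    (fun x _ => (hA.differentiable one_ne_zero _).hasFDerivAt.comp_hasDerivAt_of_eq 0
      (hasLineDerivAt_heat f t x v) (by simp))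
    (fun x _ => hasLineDerivAt_heat g t x v)

lemma integral_comp_heat_apply_laplacian {ι : Type*} [Fintype ι] (b : OrthonormalBasis ι ℝ E)
    {A : V → W →L[ℝ] Z} (hA : ContDiff ℝ 1 A) (f : 𝓢(E, V)) (g : 𝓢(E, W)) (t : ℝ) :
    ∫ x, A (heat t f x) (heat t (Δ g : 𝓢(E, W)) x) =
      -∫ x, ∑ k, fderiv ℝ A (heat t f x) (heat t (∂_{b k} f : 𝓢(E, V)) x)
        (heat t (∂_{b k} g : 𝓢(E, W)) x) := by
  simp only [laplacian_eq_sum b, heat_sum, map_sum]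
  rw [integral_finsetSum _ fun k _ => integrable_comp_heat_apply hA.continuous f _ t,
    integral_finsetSum _ fun k _ => integrable_comp_heat_apply_apply
      (hA.continuous_fderiv one_ne_zero) f _ _ t, ← Finset.sum_neg_distrib]
  exact Finset.sum_congr rfl fun k _ => integral_comp_heat_apply_lineDeriv hA f _ t (b k)

variable {B : V → ℝ} {T : ℝ}

lemma sub_comp_heat_eq_integral (hB : ContDiff ℝ 1 B) (f : 𝓢(E, V)) (hT : 0 ≤ T) (x : E) :
    B (f x) - B (heat T f x) = -(1 / 2) *
      ∫ t in Set.Ioc 0 T, fderiv ℝ B (heat t f x) (heat t (Δ f : 𝓢(E, V)) x) := by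
  have hderiv : ∀ t ∈ Set.Ioo 0 T, HasDerivAt (fun t => B (heat t f x))
      (1 / 2 * fderiv ℝ B (heat t f x) (heat t (Δ f : 𝓢(E, V)) x)) t := fun t ht =>
    ((hB.differentiable one_ne_zero _).hasFDerivAt.comp_hasDerivAt t
      (hasDerivAt_heat f ht.1 x)).congr_deriv (by simp)
  have hcont : Continuous fun t => fderiv ℝ B (heat t f x) (heat t (Δ f : 𝓢(E, V)) x) :=
    ((hB.continuous_fderiv one_ne_zero).comp (continuous_heat_left f x)).clm_apply
      (continuous_heat_left _ x)
  have hftc := intervalIntegral.integral_eq_sub_of_hasDerivAt_of_le hT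
    (hB.continuous.comp (continuous_heat_left f x)).continuousOn hderiv
    ((hcont.const_mul _).intervalIntegrable _ _)
  simp only [intervalIntegral.integral_of_le hT, integral_const_mul, Function.comp_apply,
    heat_zero] at hftc
  linarith

lemma integrable_sub_comp_heat (hB : ContDiff ℝ 1 B) (f : 𝓢(E, V)) (hT : 0 ≤ T) :
    Integrable fun x => B (f x) - B (heat T f x) := by
  simp only [sub_comp_heat_eq_integral hB f hT]
  exact (integrable_comp_heat_apply_slab (hB.continuous_fderiv one_ne_zero) f _ T
    ).integral_prod_right.const_mul _

lemma integral_sub_comp_heat (hB : ContDiff ℝ 1 B) (f : 𝓢(E, V)) (hT : 0 ≤ T) :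
    ∫ x, (B (f x) - B (heat T f x)) = -(1 / 2) *
      ∫ p, fderiv ℝ B (heat p.1 f p.2) (heat p.1 (Δ f : 𝓢(E, V)) p.2) ∂(slab E T) := by
  simp only [sub_comp_heat_eq_integral hB f hT, integral_const_mul]
  congr 1
  exact (integral_prod_symm _ (integrable_comp_heat_apply_slab
    (hB.continuous_fderiv one_ne_zero) f _ T)).symm

/-- Integration by parts in space turns `d/dt ∫ B (heat t f)` into a Hessian term. -/
lemma integral_sum_hessian_heat {ι : Type*} [Fintype ι] (b : OrthonormalBasis ι ℝ E)
    (hB : ContDiff ℝ 2 B) (f : 𝓢(E, V)) (hT : 0 ≤ T) :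
    ∫ p, ∑ k, fderiv ℝ (fderiv ℝ B) (heat p.1 f p.2) (heat p.1 (∂_{b k} f : 𝓢(E, V)) p.2)
        (heat p.1 (∂_{b k} f : 𝓢(E, V)) p.2) ∂(slab E T) =
      2 * ∫ x, (B (f x) - B (heat T f x)) := by
  have hB' : ContDiff ℝ 1 (fderiv ℝ B) := hB.fderiv_right (by norm_num)
  rw [integral_sub_comp_heat (hB.of_le one_le_two) f hT,
    integral_prod _ (integrable_comp_heat_apply_slab hB'.continuous f _ T),
    integral_prod _ (integrable_finsetSum _ fun k _ => integrable_comp_heat_apply_apply_slab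
      (hB'.continuous_fderiv one_ne_zero) f _ _ T)]
  simp only [integral_comp_heat_apply_laplacian b hB', integral_neg]
  ring

end Flow

section RegPow

/-- The function `(u² + e)^(r/2)`, a regularization of `|u|^r` that is smooth for `e > 0`. -/
def regPow (r e u : ℝ) : ℝ := (u ^ 2 + e) ^ (r / 2)

variable {r e : ℝ}

lemma regPow_zero_left (r u : ℝ) : regPow r 0 u = |u| ^ r := by
  rw [regPow, add_zero, ← sq_abs, ← rpow_natCast, ← rpow_mul (abs_nonneg u)]
  congr 1
  push_cast
  ring

lemma regPow_pos (he : 0 < e) (u : ℝ) : 0 < regPow r e u := by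
  unfold regPow; positivity

lemma regPow_nonneg (he : 0 ≤ e) (u : ℝ) : 0 ≤ regPow r e u := by
  unfold regPow; positivity

lemma regPow_le_regPow {e' u v : ℝ} (hr : 0 ≤ r) (he : 0 ≤ e) (hee' : e ≤ e') (huv : |u| ≤ |v|) :
    regPow r e u ≤ regPow r e' v := by
  have huv' : u ^ 2 ≤ v ^ 2 := sq_le_sq.2 huv
  unfold regPow
  gcongr

lemma regPow_le_add (hr : 0 ≤ r) (hr2 : r ≤ 2) (he : 0 ≤ e) (u : ℝ) :
    regPow r e u ≤ |u| ^ r + regPow r e 0 := by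
  rw [← regPow_zero_left]
  simpa [regPow] using rpow_add_le_add_rpow (sq_nonneg u) he (by positivity : 0 ≤ r / 2)
    (by linarith)

lemma regPow_eq_mul_regPow_sub_two (he : 0 < e) (u : ℝ) :
    regPow r e u = (u ^ 2 + e) * regPow (r - 2) e u := by
  rw [regPow, regPow, mul_comm, ← rpow_add_one (by positivity)]
  ring_nf

lemma sq_mul_regPow_sub_two_le (he : 0 < e) (u : ℝ) :
    u ^ 2 * regPow (r - 2) e u ≤ regPow r e u := by
  rw [regPow_eq_mul_regPow_sub_two (r := r) he]
  exact mul_le_mul_of_nonneg_right (by linarith) (regPow_nonneg he.le u)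

lemma contDiff_regPow {n : WithTop ℕ∞} (he : 0 < e) : ContDiff ℝ n (regPow r e) :=
  ContDiff.rpow_const_of_ne (by fun_prop) fun u => by positivity

/-- The derivative of `regPow r e`. -/
def regPowDeriv (r e u : ℝ) : ℝ := r * u * regPow (r - 2) e u

lemma hasDerivAt_regPow (he : 0 < e) (u : ℝ) :
    HasDerivAt (regPow r e) (regPowDeriv r e u) u := by
  have hbase : HasDerivAt (fun u : ℝ => u ^ 2 + e) (2 * u) u := by
    simpa using (hasDerivAt_pow 2 u).add_const e
  refine (hbase.rpow_const (p := r / 2) (Or.inl (by positivity))).congr_deriv ?_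
  rw [regPowDeriv, regPow, show (r - 2) / 2 = r / 2 - 1 by ring]
  ring

lemma continuous_regPow_param (hr : 0 ≤ r) (u : ℝ) : Continuous fun e => regPow r e u :=
  (by fun_prop : Continuous fun e : ℝ => u ^ 2 + e).rpow_const fun _ => Or.inr (by positivity)

/-- The second derivative of `regPow r e`. -/
def regPowHess (r e u : ℝ) : ℝ :=
  r * (regPow (r - 2) e u + (r - 2) * (u ^ 2 * regPow (r - 4) e u))

lemma hasDerivAt_regPowDeriv (he : 0 < e) (u : ℝ) :
    HasDerivAt (regPowDeriv r e) (regPowHess r e u) u := by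
  refine (((hasDerivAt_id u).const_mul r).mul (hasDerivAt_regPow he u)).congr_deriv ?_
  rw [regPowHess, regPowDeriv, show r - 2 - 2 = r - 4 by ring]
  simp only [id]
  ring

lemma regPowDeriv_sq_le (he : 0 < e) (u : ℝ) :
    regPowDeriv r e u ^ 2 ≤ r ^ 2 * (regPow r e u * regPow (r - 2) e u) :=
  calc regPowDeriv r e u ^ 2
      = r ^ 2 * ((u ^ 2 * regPow (r - 2) e u) * regPow (r - 2) e u) := by
        unfold regPowDeriv; ring
    _ ≤ r ^ 2 * (regPow r e u * regPow (r - 2) e u) :=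
        mul_le_mul_of_nonneg_left (mul_le_mul_of_nonneg_right (sq_mul_regPow_sub_two_le he u)
          (regPow_nonneg he.le u)) (sq_nonneg r)

lemma regPowHess_nonneg (hr : 2 ≤ r) (he : 0 < e) (u : ℝ) : 0 ≤ regPowHess r e u := by
  have : 0 ≤ r - 2 := by linarith
  have h2 : 0 ≤ regPow (r - 2) e u := regPow_nonneg he.le u
  have h4 : 0 ≤ regPow (r - 4) e u := regPow_nonneg he.le u
  unfold regPowHess
  positivity

lemma le_regPowHess (hr : 0 ≤ r) (hr2 : r ≤ 2) (he : 0 < e) (u : ℝ) :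
    r * (r - 1) * regPow (r - 2) e u ≤ regPowHess r e u := by
  have h : u ^ 2 * regPow (r - 4) e u ≤ regPow (r - 2) e u := by
    simpa only [sub_sub, show (2 : ℝ) + 2 = 4 by norm_num] using
      sq_mul_regPow_sub_two_le (r := r - 2) he u
  have h' := mul_le_mul_of_nonpos_left h (by linarith : r - 2 ≤ 0)
  calc r * (r - 1) * regPow (r - 2) e u
      = r * (regPow (r - 2) e u + (r - 2) * regPow (r - 2) e u) := by ring
    _ ≤ regPowHess r e u := by unfold regPowHess; gcongr

end RegPow

section Bellman

/-- The factor in front of `|y|^q` in the Bellman function. Its value makes the coefficient of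
`dy²` in the Hessian dominate the cross term and the part coming from the second summand. -/
def bellmanConst (q : ℝ) : ℝ := (5 * q ^ 2 + 1) / (q * (q - 1))

/-- A smooth regularization, for `p ≥ 2`, of the Bellman function
`K |y|^q + x² (|x|^p + |y|^q)^(1 - 2/p)` of Nazarov and Treil. -/
def bellman (p q e : ℝ) (z : ℝ × ℝ) : ℝ :=
  bellmanConst q * regPow q e z.2 + z.1 ^ 2 * (regPow p e z.1 + regPow q e z.2) ^ (1 - 2 / p)

variable {p q e : ℝ}

lemma bellmanConst_pos (hq : 1 < q) : 0 < bellmanConst q := by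
  have : 0 < q - 1 := by linarith
  unfold bellmanConst; positivity

lemma one_sub_two_div_nonneg (hp : 2 ≤ p) : 0 ≤ 1 - 2 / p := by
  rw [sub_nonneg, div_le_one (by linarith)]; exact hp

lemma le_two_of_holderConjugate (hp : 2 ≤ p) (hpq : p.HolderConjugate q) : q ≤ 2 := by
  nlinarith [hpq.mul_eq_add, hpq.symm.lt]

lemma contDiff_bellman (he : 0 < e) : ContDiff ℝ 2 (bellman p q e) := by
  have hy : ContDiff ℝ 2 fun z : ℝ × ℝ => regPow q e z.2 := (contDiff_regPow he).comp contDiff_snd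
  have hS : ContDiff ℝ 2 fun z : ℝ × ℝ => regPow p e z.1 + regPow q e z.2 :=
    ((contDiff_regPow he).comp contDiff_fst).add hy
  exact (contDiff_const.mul hy).add ((contDiff_fst.pow 2).mul (hS.rpow_const_of_ne fun z =>
    (add_pos (regPow_pos he _) (regPow_pos he _)).ne'))

lemma bellman_zero_le (hq : 1 < q) (he : 0 ≤ e) (z : ℝ × ℝ) :
    bellman p q e 0 ≤ bellman p q e z := by
  have hy : regPow q e 0 ≤ regPow q e z.2 :=
    regPow_le_regPow (by linarith) he le_rfl (by simp)
  have hK := bellmanConst_pos hq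
  have hS : 0 ≤ (regPow p e z.1 + regPow q e z.2) ^ (1 - 2 / p) :=
    rpow_nonneg (add_nonneg (regPow_nonneg he _) (regPow_nonneg he _)) _
  simp only [bellman, Prod.fst_zero, Prod.snd_zero, ne_eq, OfNat.ofNat_ne_zero, not_false_eq_true,
    zero_pow, zero_mul, add_zero]
  exact (mul_le_mul_of_nonneg_left hy hK.le).trans (le_add_of_nonneg_right (by positivity))

lemma bellman_sub_bellman_zero_le (hp : 2 ≤ p) (hpq : p.HolderConjugate q) (he : 0 ≤ e)
    (he1 : e ≤ 1) {M N : ℝ} {z : ℝ × ℝ} (hM : |z.1| ≤ |M|) (hN : |z.2| ≤ |N|) :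
    bellman p q e z - bellman p q e 0 ≤ bellmanConst q * |z.2| ^ q +
      (regPow p 1 M + regPow q 1 N) ^ (1 - 2 / p) * z.1 ^ 2 := by
  have hy := regPow_le_add hpq.symm.nonneg (le_two_of_holderConjugate hp hpq) he z.2
  have hS : (regPow p e z.1 + regPow q e z.2) ^ (1 - 2 / p) ≤
      (regPow p 1 M + regPow q 1 N) ^ (1 - 2 / p) :=
    rpow_le_rpow (add_nonneg (regPow_nonneg he _) (regPow_nonneg he _))
      (add_le_add (regPow_le_regPow hpq.nonneg he he1 hM)
        (regPow_le_regPow hpq.symm.nonneg he he1 hN)) (one_sub_two_div_nonneg hp)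
  have hKy := mul_le_mul_of_nonneg_left hy (bellmanConst_pos hpq.symm.lt).le
  have hxS := mul_le_mul_of_nonneg_right hS (sq_nonneg z.1)
  simp only [bellman, Prod.fst_zero, Prod.snd_zero, ne_eq, OfNat.ofNat_ne_zero, not_false_eq_true,
    zero_pow, zero_mul, add_zero]
  linarith

lemma bellman_param_zero_le (hp : 0 < p) (q : ℝ) (z : ℝ × ℝ) :
    bellman p q 0 z ≤ bellmanConst q * |z.2| ^ q + (|z.1| ^ p + |z.2| ^ q) := by
  simp only [bellman, regPow_zero_left]
  gcongr
  set S := |z.1| ^ p + |z.2| ^ q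
  have hS : 0 ≤ S := by positivity
  have hx : z.1 ^ 2 ≤ S ^ (2 / p) := by
    calc z.1 ^ 2 = (|z.1| ^ p) ^ (2 / p) := by
          rw [← rpow_mul (abs_nonneg _), mul_div_cancel₀ _ hp.ne']
          norm_num
      _ ≤ S ^ (2 / p) :=
          rpow_le_rpow (by positivity) (le_add_of_nonneg_right (by positivity)) (by positivity)
  calc z.1 ^ 2 * S ^ (1 - 2 / p) ≤ S ^ (2 / p) * S ^ (1 - 2 / p) := by gcongr
    _ = S := by rw [← rpow_add' hS (by norm_num)]; norm_num

lemma bellman_param_zero_zero (p : ℝ) (hq : q ≠ 0) : bellman p q 0 0 = 0 := by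
  simp [bellman, regPow_zero_left, hq]

lemma continuous_bellman_param (hp : 2 ≤ p) (hq : 0 ≤ q) (z : ℝ × ℝ) :
    Continuous fun e => bellman p q e z :=
  have hy := continuous_regPow_param hq z.2
  (hy.const_mul _).add ((((continuous_regPow_param (by linarith) z.1).add hy).rpow_const
    fun _ => Or.inr (one_sub_two_div_nonneg hp)).const_mul _)

end Bellman

section Hessian

lemma fderiv_fderiv_apply_self_eq {V : Type*} [NormedAddCommGroup V] [NormedSpace ℝ V] {B : V → ℝ}
    (hB : ContDiff ℝ 2 B) {z w : V} {φ' : ℝ → ℝ} {c : ℝ}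
    (hφ : ∀ s, HasDerivAt (fun s : ℝ => B (z + s • w)) (φ' s) s) (hφ' : HasDerivAt φ' c 0) :
    fderiv ℝ (fderiv ℝ B) z w w = c := by
  have hline : ∀ s : ℝ, HasDerivAt (fun s : ℝ => z + s • w) w s := fun s => by
    simpa using ((hasDerivAt_id s).smul_const w).const_add z
  have hfst : φ' = fun s => fderiv ℝ B (z + s • w) w := funext fun s =>
    (hφ s).unique ((hB.differentiable two_ne_zero _).hasFDerivAt.comp_hasDerivAt s (hline s))
  have hsnd : HasDerivAt φ' (fderiv ℝ (fderiv ℝ B) (z + (0 : ℝ) • w) w w) 0 := by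
    rw [hfst]
    exact ((((hB.fderiv_right (m := 1) (by norm_num)).differentiable one_ne_zero _).hasFDerivAt
      ).comp_hasDerivAt 0 (hline 0)).clm_apply (hasDerivAt_const 0 w) |>.congr_deriv (by simp)
  simpa using hsnd.unique hφ'

section Line

variable {S S' : ℝ → ℝ} (x ξ θ : ℝ)

lemma hasDerivAt_sq_mul_rpow {s : ℝ} (hS : HasDerivAt S (S' s) s) (hS0 : S s ≠ 0) :
    HasDerivAt (fun s => (x + s * ξ) ^ 2 * S s ^ θ)
      (2 * (x + s * ξ) * ξ * S s ^ θ + (x + s * ξ) ^ 2 * (θ * S s ^ (θ - 1) * S' s)) s := by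
  have hsq : HasDerivAt (fun s : ℝ => (x + s * ξ) ^ 2) (2 * (x + s * ξ) * ξ) s := by
    simpa using (((hasDerivAt_id s).mul_const ξ).const_add x).fun_pow 2
  exact (hsq.mul (hS.rpow_const (Or.inl hS0))).congr_deriv (by ring)

lemma hasDerivAt_deriv_sq_mul_rpow {S'' : ℝ} (hS : HasDerivAt S (S' 0) 0)
    (hS' : HasDerivAt S' S'' 0) (hS0 : S 0 ≠ 0) :
    HasDerivAt (fun s => 2 * (x + s * ξ) * ξ * S s ^ θ +
        (x + s * ξ) ^ 2 * (θ * S s ^ (θ - 1) * S' s))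
      (2 * ξ ^ 2 * S 0 ^ θ + 4 * x * ξ * (θ * S 0 ^ (θ - 1) * S' 0) +
        x ^ 2 * (θ * S 0 ^ (θ - 1) * S'' - θ * (1 - θ) * S 0 ^ (θ - 2) * S' 0 ^ 2)) 0 := by
  have hlin : HasDerivAt (fun s : ℝ => 2 * (x + s * ξ) * ξ) (2 * ξ * ξ) 0 := by
    simpa using ((((hasDerivAt_id (0 : ℝ)).mul_const ξ).const_add x).const_mul 2).mul_const ξ
  have hsq : HasDerivAt (fun s : ℝ => (x + s * ξ) ^ 2) (2 * x * ξ) 0 := by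
    simpa using (((hasDerivAt_id (0 : ℝ)).mul_const ξ).const_add x).fun_pow 2
  have hrpow : ∀ r, HasDerivAt (fun s => S s ^ r) (S' 0 * r * S 0 ^ (r - 1)) 0 := fun r =>
    hS.rpow_const (Or.inl hS0)
  refine ((hlin.mul (hrpow θ)).add
    (hsq.mul (((hrpow (θ - 1)).const_mul θ).mul hS'))).congr_deriv ?_
  rw [sub_sub, one_add_one_eq_two, Pi.mul_apply]
  ring

end Line

variable {p q e : ℝ}

lemma hessian_bellman (he : 0 < e) {x y S θ : ℝ} (hθ : θ = 1 - 2 / p)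
    (hS : S = regPow p e x + regPow q e y) (ξ η : ℝ) :
    fderiv ℝ (fderiv ℝ (bellman p q e)) (x, y) (ξ, η) (ξ, η) =
      (2 * S ^ θ + 4 * x * (θ * S ^ (θ - 1) * regPowDeriv p e x) +
        x ^ 2 * (θ * S ^ (θ - 1) * regPowHess p e x -
          θ * (1 - θ) * S ^ (θ - 2) * regPowDeriv p e x ^ 2)) * ξ ^ 2 +
      2 * (2 * x * (θ * S ^ (θ - 1) * regPowDeriv q e y) -
        x ^ 2 * (θ * (1 - θ) * S ^ (θ - 2) * regPowDeriv p e x * regPowDeriv q e y)) * ξ * η +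
      (bellmanConst q * regPowHess q e y +
        x ^ 2 * (θ * S ^ (θ - 1) * regPowHess q e y -
          θ * (1 - θ) * S ^ (θ - 2) * regPowDeriv q e y ^ 2)) * η ^ 2 := by
  have hline : ∀ x ξ s : ℝ, HasDerivAt (fun s : ℝ => x + s * ξ) ξ s := fun x ξ s => by
    simpa using ((hasDerivAt_id s).mul_const ξ).const_add x
  have hreg : ∀ r x ξ s, HasDerivAt (fun s => regPow r e (x + s * ξ))
      (regPowDeriv r e (x + s * ξ) * ξ) s := fun r x ξ s =>
    (hasDerivAt_regPow he _).comp s (hline x ξ s)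
  have hreg' : ∀ r x ξ, HasDerivAt
      (fun s => regPowDeriv r e (x + s * ξ) * ξ)
      (regPowHess r e x * ξ * ξ) 0 := fun r x ξ =>
    (((hasDerivAt_regPowDeriv he _).comp 0 (hline x ξ 0)).mul_const ξ).congr_deriv (by simp)
  set s₁ : ℝ → ℝ := fun s => regPow p e (x + s * ξ) + regPow q e (y + s * η)
  set ds₁ : ℝ → ℝ := fun s => regPowDeriv p e (x + s * ξ) * ξ +
    regPowDeriv q e (y + s * η) * η
  have hsum : ∀ s, HasDerivAt s₁ (ds₁ s) s := fun s => (hreg p x ξ s).fun_add (hreg q y η s)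
  have hsum0 : ∀ s, s₁ s ≠ 0 := fun s =>
    (add_pos (regPow_pos he _) (regPow_pos he _)).ne'
  have hfst : ∀ s, HasDerivAt (fun s => bellman p q e ((x, y) + s • (ξ, η))) _ s := fun s =>
    ((hreg q y η s).const_mul (bellmanConst q)).fun_add
      (hasDerivAt_sq_mul_rpow x ξ (1 - 2 / p) (hsum s) (hsum0 s))
  have hsnd := ((hreg' q y η).const_mul (bellmanConst q)).fun_add
    (hasDerivAt_deriv_sq_mul_rpow x ξ (1 - 2 / p) (hsum 0) ((hreg' p x ξ).fun_add (hreg' q y η))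
      (hsum0 0))
  rw [fderiv_fderiv_apply_self_eq (contDiff_bellman he) hfst hsnd, ← hθ]
  simp only [s₁, ds₁, zero_mul, add_zero, ← hS]
  ring

lemma two_mul_le_bellman_xx {p θ x G h σ S : ℝ} (hp : 0 ≤ p) (hθ : 0 ≤ θ) (hθp : (1 - θ) * p = 2)
    (hG : 0 ≤ G) (hxG : x ^ 2 * G ≤ S) (hσ : 0 ≤ σ) (hh : 0 ≤ h) :
    2 * (σ * S ^ 2) ≤ 2 * (σ * S ^ 2) + 4 * x * (θ * (σ * S) * (p * x * G)) +
      x ^ 2 * (θ * (σ * S) * h - θ * (1 - θ) * σ * (p * x * G) ^ 2) := by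
  have hm : 0 ≤ x ^ 2 * G := by positivity
  have hS : 0 ≤ S := hm.trans hxG
  have : 0 ≤ S - x ^ 2 * G := sub_nonneg.2 hxG
  have hrest : 0 ≤ 2 * p * θ * σ * (x ^ 2 * G) * (S + (S - x ^ 2 * G)) +
      x ^ 2 * (θ * (σ * S) * h) := by positivity
  linear_combination hrest + (p * θ * σ * x ^ 4 * G ^ 2) * hθp

lemma bellman_xy_sq_le {p q θ x F G k σ S : ℝ} (hθ : 0 ≤ θ) (hθ1 : θ ≤ 1)
    (hθp : (1 - θ) * p = 2) (hF : 0 ≤ F) (hG : 0 ≤ G) (hxG : x ^ 2 * G ≤ S) (hσ : 0 ≤ σ)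
    (hk : k ^ 2 ≤ q ^ 2 * (S * F)) (hxS : x ^ 2 * (σ * S) ≤ 1) :
    (2 * x * (θ * (σ * S) * k) - x ^ 2 * (θ * (1 - θ) * σ * (p * x * G) * k)) ^ 2 ≤
      4 * q ^ 2 * (σ * S ^ 2) * F := by
  have hm : 0 ≤ x ^ 2 * G := by positivity
  have hS : 0 ≤ S := hm.trans hxG
  have : 0 ≤ S - x ^ 2 * G := sub_nonneg.2 hxG
  calc (2 * x * (θ * (σ * S) * k) - x ^ 2 * (θ * (1 - θ) * σ * (p * x * G) * k)) ^ 2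
      = (2 * θ * σ * x * k * (S - x ^ 2 * G)) ^ 2 := by
        congr 1
        linear_combination (-θ * σ * x ^ 3 * G * k) * hθp
    _ = 4 * θ ^ 2 * σ ^ 2 * x ^ 2 * k ^ 2 * (S - x ^ 2 * G) ^ 2 := by ring
    _ ≤ 4 * 1 ^ 2 * σ ^ 2 * x ^ 2 * (q ^ 2 * (S * F)) * S ^ 2 := by
        gcongr
        linarith
    _ = 4 * q ^ 2 * (σ * S ^ 2) * F * (x ^ 2 * (σ * S)) := by ring
    _ ≤ 4 * q ^ 2 * (σ * S ^ 2) * F := mul_le_of_le_one_right (by positivity) hxS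

lemma le_bellman_yy {q θ x F h k σ S : ℝ} (hq : 1 < q) (hθ : 0 ≤ θ) (hθ1 : θ ≤ 1) (hF : 0 ≤ F)
    (hS : 0 ≤ S) (hσ : 0 ≤ σ) (hh : q * (q - 1) * F ≤ h) (hk : k ^ 2 ≤ q ^ 2 * (S * F))
    (hxS : x ^ 2 * (σ * S) ≤ 1) :
    (4 * q ^ 2 + 1) * F ≤ bellmanConst q * h +
      x ^ 2 * (θ * (σ * S) * h - θ * (1 - θ) * σ * k ^ 2) := by
  have hq' : 0 < q - 1 := sub_pos.2 hq
  have hh0 : 0 ≤ h := le_trans (by positivity) hh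
  have hmain : (5 * q ^ 2 + 1) * F ≤ bellmanConst q * h := by
    calc (5 * q ^ 2 + 1) * F = bellmanConst q * (q * (q - 1) * F) := by
          unfold bellmanConst; field_simp
      _ ≤ bellmanConst q * h := mul_le_mul_of_nonneg_left hh (bellmanConst_pos hq).le
  have hθθ : θ * (1 - θ) ≤ 1 := mul_le_one₀ hθ1 (by linarith) (by linarith)
  have hneg : x ^ 2 * (θ * (1 - θ) * σ * k ^ 2) ≤ q ^ 2 * F := by
    calc x ^ 2 * (θ * (1 - θ) * σ * k ^ 2) ≤ x ^ 2 * (1 * σ * (q ^ 2 * (S * F))) := by gcongr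
      _ = q ^ 2 * F * (x ^ 2 * (σ * S)) := by ring
      _ ≤ q ^ 2 * F := mul_le_of_le_one_right (by positivity) hxS
  have hpos : 0 ≤ x ^ 2 * (θ * (σ * S) * h) := by positivity
  linarith

lemma sq_mul_rpow_sub_one_le_one {θ x S : ℝ} (hp : 0 < p) (hθp : (1 - θ) * p = 2) (he : 0 < e)
    (hS : regPow p e x ≤ S) : x ^ 2 * S ^ (θ - 1) ≤ 1 := by
  have hS0 : 0 < S := (regPow_pos he x).trans_le hS
  have hθ1 : 0 ≤ 1 - θ := nonneg_of_mul_nonneg_left (by rw [hθp]; norm_num) hp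
  have hx : x ^ 2 ≤ S ^ (1 - θ) :=
    calc x ^ 2 ≤ x ^ 2 + e := by linarith
      _ = regPow p e x ^ (1 - θ) := by
        rw [regPow, ← rpow_mul (by positivity), show p / 2 * (1 - θ) = 1 by linarith, rpow_one]
      _ ≤ S ^ (1 - θ) := rpow_le_rpow (regPow_nonneg he.le x) hS hθ1
  rw [← neg_sub, rpow_neg hS0.le, ← div_eq_mul_inv]
  exact div_le_one_of_le₀ hx (rpow_nonneg hS0.le _)

lemma one_le_rpow_mul_regPow {θ y S : ℝ} (hθ : 0 ≤ θ) (hθq : q / 2 * θ + (q - 2) / 2 = 0)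
    (he : 0 < e) (hS : regPow q e y ≤ S) : 1 ≤ S ^ θ * regPow (q - 2) e y :=
  calc 1 = regPow q e y ^ θ * regPow (q - 2) e y := by
        rw [regPow, regPow, ← rpow_mul (by positivity), ← rpow_add (by positivity), hθq, rpow_zero]
    _ ≤ S ^ θ * regPow (q - 2) e y :=
        mul_le_mul_of_nonneg_right (rpow_le_rpow (regPow_nonneg he.le y) hS hθ)
          (regPow_nonneg he.le y)

lemma add_le_quadratic_form {a b c D F K : ℝ} (hD : 0 < D) (ha : 2 * D ≤ a)
    (hb : b ^ 2 ≤ K * D * F) (hc : (K + 1) * F ≤ c) (ξ η : ℝ) :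
    D * ξ ^ 2 + F * η ^ 2 ≤ a * ξ ^ 2 + 2 * b * ξ * η + c * η ^ 2 := by
  have hsq : 0 ≤ D * ξ ^ 2 + 2 * b * ξ * η + b ^ 2 / D * η ^ 2 := by
    have : 0 ≤ (D * ξ + b * η) ^ 2 / D := by positivity
    convert this using 1
    field_simp
    ring
  have hb' : b ^ 2 / D ≤ K * F := by rw [div_le_iff₀ hD]; linarith
  linarith [mul_le_mul_of_nonneg_right ha (sq_nonneg ξ),
    mul_le_mul_of_nonneg_right hb' (sq_nonneg η), mul_le_mul_of_nonneg_right hc (sq_nonneg η)]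

/-- The weights `D` and `F` may degenerate, but not their product, which is all that bounding
`|w.1| |w.2|` by the Hessian requires. -/
lemma exists_le_hessian_bellman (hp : 2 ≤ p) (hpq : p.HolderConjugate q) (he : 0 < e)
    (z : ℝ × ℝ) : ∃ D F : ℝ, 0 < D ∧ 0 < F ∧ 1 ≤ D * F ∧ ∀ w : ℝ × ℝ,
      D * w.1 ^ 2 + F * w.2 ^ 2 ≤ fderiv ℝ (fderiv ℝ (bellman p q e)) z w w := by
  obtain ⟨x, y⟩ := z
  set θ := 1 - 2 / p with hθ
  set S := regPow p e x + regPow q e y with hS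
  have hp0 : p ≠ 0 := hpq.ne_zero
  have hθp : (1 - θ) * p = 2 := by rw [hθ]; field_simp; ring
  have hθq : q / 2 * θ + (q - 2) / 2 = 0 := by
    rw [hθ]; field_simp; linear_combination 2 * hpq.mul_eq_add
  have hθ0 : 0 ≤ θ := one_sub_two_div_nonneg hp
  have hθ1 : θ ≤ 1 := by nlinarith
  have hh := regPow_pos (r := p) he x
  have hk := regPow_pos (r := q) he y
  have hF := regPow_pos (r := q - 2) he y
  have hS0 : 0 < S := add_pos hh hk
  have hσ1 : S ^ (θ - 1) = S ^ (θ - 2) * S := by rw [← rpow_add_one hS0.ne']; ring_nf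
  have hσ2 : S ^ θ = S ^ (θ - 2) * S ^ 2 := by rw [← rpow_add_natCast hS0.ne']; norm_num
  have hxS : x ^ 2 * (S ^ (θ - 2) * S) ≤ 1 := by
    rw [← hσ1]
    exact sq_mul_rpow_sub_one_le_one hpq.pos hθp he (by linarith)
  have hDF : 1 ≤ S ^ θ * regPow (q - 2) e y :=
    one_le_rpow_mul_regPow hθ0 hθq he (by linarith)
  have hk' : regPowDeriv q e y ^ 2 ≤ q ^ 2 * (S * regPow (q - 2) e y) :=
    (regPowDeriv_sq_le he y).trans (by gcongr; linarith)
  have hxG := (sq_mul_regPow_sub_two_le (r := p) he x).trans (by linarith : _ ≤ S)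
  have hG := regPow_nonneg (r := p - 2) he.le x
  have hσ : 0 ≤ S ^ (θ - 2) := rpow_nonneg hS0.le _
  refine ⟨S ^ θ, regPow (q - 2) e y, by positivity, hF, hDF, fun ⟨ξ, η⟩ => ?_⟩
  rw [hessian_bellman he hθ hS, hσ1, hσ2]
  exact add_le_quadratic_form (by positivity)
    (two_mul_le_bellman_xx hpq.nonneg hθ0 hθp hG hxG hσ (regPowHess_nonneg hp he x))
    (bellman_xy_sq_le hθ0 hθ1 hθp hF.le hG hxG hσ hk' hxS)
    (le_bellman_yy hpq.symm.lt hθ0 hθ1 hF.le hS0.le hσ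
      (le_regPowHess hpq.symm.nonneg (le_two_of_holderConjugate hp hpq) he y) hk' hxS) ξ η

end Hessian

lemma lpNorm_ofReal_rpow {X V : Type*} [MeasurableSpace X] {μ : Measure X} [NormedAddCommGroup V]
    {f : X → V} (hf : AEStronglyMeasurable f μ) {r : ℝ} (hr : 0 < r) :
    lpNorm f (ENNReal.ofReal r) μ ^ r = ∫ x, ‖f x‖ ^ r ∂μ := by
  rw [lpNorm_eq_integral_norm_rpow_toReal (by simpa using hr) ENNReal.ofReal_ne_top hf,
    ENNReal.toReal_ofReal hr.le, rpow_inv_rpow (integral_nonneg fun x => by positivity) hr.ne']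

section Pair

variable {E : Type*} [NormedAddCommGroup E] [NormedSpace ℝ E]

/-- The Schwartz function `x ↦ (f x, g x)`. -/
def schwartzPair (f g : 𝓢(E, ℝ)) : 𝓢(E, ℝ × ℝ) :=
  postcompCLM (ContinuousLinearMap.inl ℝ ℝ ℝ) f + postcompCLM (ContinuousLinearMap.inr ℝ ℝ ℝ) g

lemma schwartzPair_apply (f g : 𝓢(E, ℝ)) (x : E) : schwartzPair f g x = (f x, g x) := by
  simp [schwartzPair]

lemma lineDeriv_schwartzPair (f g : 𝓢(E, ℝ)) (v : E) :
    (∂_{v} (schwartzPair f g) : 𝓢(E, ℝ × ℝ)) = schwartzPair (∂_{v} f) (∂_{v} g) := by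
  ext1 x
  have hpair : HasFDerivAt (schwartzPair f g) ((fderiv ℝ f x).prod (fderiv ℝ g x)) x := by
    rw [funext (schwartzPair_apply f g)]
    exact f.differentiableAt.hasFDerivAt.prodMk g.differentiableAt.hasFDerivAt
  simp [lineDerivOp_apply_eq_fderiv, schwartzPair_apply, hpair.fderiv]

lemma laplacian_schwartzPair {E : Type*} [NormedAddCommGroup E] [InnerProductSpace ℝ E]
    [FiniteDimensional ℝ E] (f g : 𝓢(E, ℝ)) :
    (Δ (schwartzPair f g) : 𝓢(E, ℝ × ℝ)) = schwartzPair (Δ f) (Δ g) := by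
  simp only [laplacian_eq_sum (stdOrthonormalBasis ℝ E), lineDeriv_schwartzPair]
  simp only [schwartzPair, map_sum, Finset.sum_add_distrib]

end Pair

lemma continuous_bellman_sub {X : Type*} [TopologicalSpace X] {f g : X → ℝ} (hf : Continuous f)
    (hg : Continuous g) (p q : ℝ) {e : ℝ} (he : 0 < e) :
    Continuous fun x => bellman p q e (f x, g x) - bellman p q e 0 :=
  ((contDiff_bellman he).continuous.comp (hf.prodMk hg)).sub continuous_const

section Embedding

variable {E : Type*} [NormedAddCommGroup E] [InnerProductSpace ℝ E] [FiniteDimensional ℝ E]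
  [MeasurableSpace E] [BorelSpace E] {V : Type*} [NormedAddCommGroup V] [NormedSpace ℝ V]

lemma integrable_norm_rpow_schwartz (f : 𝓢(E, V)) {r : ℝ} (hr : 0 < r) :
    Integrable fun x => ‖f x‖ ^ r := by
  simpa only [ENNReal.toReal_ofReal hr.le] using (f.memLp (ENNReal.ofReal r) volume
    ).integrable_norm_rpow (by simpa using hr) ENNReal.ofReal_ne_top

lemma heat_schwartzPair (f g : 𝓢(E, ℝ)) (t : ℝ) (x : E) :
    heat t (schwartzPair f g) x = (heat t f x, heat t g x) := by
  simp only [heat, schwartzPair_apply, Prod.smul_mk]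
  exact integral_pair (integrable_heat_integrand f t x) (integrable_heat_integrand g t x)

variable {p q : ℝ} {ι : Type*} [Fintype ι]

lemma two_mul_abs_mul_abs_le_sum_hessian_bellman (hp : 2 ≤ p) (hpq : p.HolderConjugate q) {e : ℝ}
    (he : 0 < e) (z : ℝ × ℝ) (w : ι → ℝ × ℝ) (i j : ι) :
    2 * (|(w i).1| * |(w j).2|) ≤ ∑ k, fderiv ℝ (fderiv ℝ (bellman p q e)) z (w k) (w k) := by
  obtain ⟨D, F, hD, hF, hDF, hle⟩ := exists_le_hessian_bellman hp hpq he z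
  set ξ := |(w i).1|
  set η := |(w j).2|
  have hsqrt : 1 ≤ √D * √F := by rw [← sqrt_mul hD.le]; exact one_le_sqrt.2 hDF
  calc 2 * (ξ * η) ≤ 2 * (√D * √F * (ξ * η)) := by
        exact mul_le_mul_of_nonneg_left (le_mul_of_one_le_left (by positivity) hsqrt) two_pos.le
    _ = 2 * (√D * ξ) * (√F * η) := by ring
    _ ≤ (√D * ξ) ^ 2 + (√F * η) ^ 2 := two_mul_le_add_sq _ _
    _ = D * (w i).1 ^ 2 + F * (w j).2 ^ 2 := by
        simp only [mul_pow, sq_sqrt, hD.le, hF.le, ξ, η, sq_abs]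
    _ ≤ D * ∑ k, (w k).1 ^ 2 + F * ∑ k, (w k).2 ^ 2 := by
        gcongr
        · exact Finset.single_le_sum (fun k _ => sq_nonneg (w k).1) (Finset.mem_univ i)
        · exact Finset.single_le_sum (fun k _ => sq_nonneg (w k).2) (Finset.mem_univ j)
    _ = ∑ k, (D * (w k).1 ^ 2 + F * (w k).2 ^ 2) := by
        rw [Finset.sum_add_distrib, Finset.mul_sum, Finset.mul_sum]
    _ ≤ _ := Finset.sum_le_sum fun k _ => hle (w k)

lemma integrable_abs_heat_mul_abs_heat (f g : 𝓢(E, ℝ)) (T : ℝ) :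
    Integrable (fun z : ℝ × E => |heat z.1 f z.2| * |heat z.1 g z.2|) (slab E T) := by
  simpa only [ContinuousLinearMap.mul_apply', abs_mul] using (integrable_comp_heat_apply_slab
    (ContinuousLinearMap.mul ℝ ℝ).continuous f g T).abs

variable (b : OrthonormalBasis ι ℝ E) (i j : ι) (f g : 𝓢(E, ℝ)) {T : ℝ}

lemma integral_abs_heat_lineDeriv_mul_le_integral_bellman (hp : 2 ≤ p) (hpq : p.HolderConjugate q)
    (hT : 0 ≤ T) {e : ℝ} (he : 0 < e)
    (h_int : Integrable fun x => bellman p q e (f x, g x) - bellman p q e 0) :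
    ∫ z, |heat z.1 (∂_{b i} f : 𝓢(E, ℝ)) z.2| * |heat z.1 (∂_{b j} g : 𝓢(E, ℝ)) z.2| ∂(slab E T) ≤
      ∫ x, (bellman p q e (f x, g x) - bellman p q e 0) := by
  have hB := contDiff_bellman (p := p) (q := q) he
  have hflow := integral_sum_hessian_heat b hB (schwartzPair f g) hT
  have hflow_int := integrable_sub_comp_heat (hB.of_le one_le_two) (schwartzPair f g) hT
  have hhess_int : Integrable (fun z : ℝ × E => ∑ k, fderiv ℝ (fderiv ℝ (bellman p q e))
      (heat z.1 (schwartzPair f g) z.2) (heat z.1 (∂_{b k} (schwartzPair f g) : 𝓢(E, ℝ × ℝ)) z.2)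
      (heat z.1 (∂_{b k} (schwartzPair f g) : 𝓢(E, ℝ × ℝ)) z.2)) (slab E T) :=
    integrable_finsetSum _ fun k _ => integrable_comp_heat_apply_apply_slab
      ((hB.fderiv_right (m := 1) (by norm_num)).continuous_fderiv one_ne_zero) _ _ _ T
  simp only [lineDeriv_schwartzPair, heat_schwartzPair, schwartzPair_apply]
    at hflow hflow_int hhess_int
  have hmain := integral_mono ((integrable_abs_heat_mul_abs_heat (∂_{b i} f) (∂_{b j} g) T
    ).const_mul 2) hhess_int fun z => two_mul_abs_mul_abs_le_sum_hessian_bellman hp hpq he _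
      (fun k => (heat z.1 (∂_{b k} f : 𝓢(E, ℝ)) z.2, heat z.1 (∂_{b k} g : 𝓢(E, ℝ)) z.2)) i j
  have hle := integral_mono hflow_int h_int fun x => sub_le_sub_left
    (bellman_zero_le hpq.symm.lt he.le _) _
  rw [integral_const_mul, hflow] at hmain
  linarith

lemma exists_integrable_bellman_sub_le (hp : 2 ≤ p) (hpq : p.HolderConjugate q) :
    ∃ F : E → ℝ, Integrable F ∧ ∀ e ∈ Set.Ioc (0 : ℝ) 1, ∀ x,
      ‖bellman p q e (f x, g x) - bellman p q e 0‖ ≤ F x := by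
  refine ⟨_, ((integrable_norm_rpow_schwartz g hpq.symm.pos).const_mul (bellmanConst q)).add
    ((integrable_norm_rpow_schwartz f two_pos).const_mul
      ((regPow p 1 (SchwartzMap.seminorm ℝ 0 0 f) + regPow q 1 (SchwartzMap.seminorm ℝ 0 0 g)) ^
        (1 - 2 / p))), fun e he x => ?_⟩
  rw [norm_of_nonneg (sub_nonneg.2 (bellman_zero_le hpq.symm.lt he.1.le _))]
  simpa using bellman_sub_bellman_zero_le hp hpq he.1.le he.2
    (z := (f x, g x)) ((f.norm_le_seminorm ℝ x).trans (le_abs_self _))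
    ((g.norm_le_seminorm ℝ x).trans (le_abs_self _))

lemma tendsto_integral_bellman_sub (hp : 2 ≤ p) (hpq : p.HolderConjugate q) :
    Tendsto (fun e => ∫ x, (bellman p q e (f x, g x) - bellman p q e 0)) (𝓝[>] 0)
      (𝓝 (∫ x, bellman p q 0 (f x, g x))) := by
  obtain ⟨F, hF, hle⟩ := exists_integrable_bellman_sub_le f g hp hpq
  have hev : ∀ᶠ e : ℝ in 𝓝[>] 0, e ∈ Set.Ioc (0 : ℝ) 1 := Ioc_mem_nhdsGT one_pos
  refine tendsto_integral_filter_of_dominated_convergence F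
    (hev.mono fun e he =>
      (continuous_bellman_sub f.continuous g.continuous p q he.1).aestronglyMeasurable)
    (hev.mono fun e he => Eventually.of_forall (hle e he)) hF (Eventually.of_forall fun x => ?_)
  have hlim := fun z => ((continuous_bellman_param hp hpq.symm.nonneg z).tendsto 0).mono_left
    (nhdsWithin_le_nhds (s := Set.Ioi 0))
  simpa [bellman_param_zero_zero p hpq.symm.ne_zero] using (hlim (f x, g x)).sub (hlim 0)

lemma integral_abs_heat_lineDeriv_mul_le_add (hp : 2 ≤ p) (hpq : p.HolderConjugate q)
    (hT : 0 ≤ T) :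
    ∫ z, |heat z.1 (∂_{b i} f : 𝓢(E, ℝ)) z.2| * |heat z.1 (∂_{b j} g : 𝓢(E, ℝ)) z.2| ∂(slab E T) ≤
      (bellmanConst q + 1) * ((∫ x, ‖f x‖ ^ p) + ∫ x, ‖g x‖ ^ q) := by
  have hK := bellmanConst_pos hpq.symm.lt
  have hfp := integrable_norm_rpow_schwartz f hpq.pos
  have hgq := integrable_norm_rpow_schwartz g hpq.symm.pos
  obtain ⟨F, hF, hle⟩ := exists_integrable_bellman_sub_le f g hp hpq
  have hzero := bellman_param_zero_zero p hpq.symm.ne_zero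
  calc _ ≤ ∫ x, bellman p q 0 (f x, g x) := by
        refine ge_of_tendsto (tendsto_integral_bellman_sub f g hp hpq) ?_
        filter_upwards [Ioc_mem_nhdsGT one_pos] with e he
        exact integral_abs_heat_lineDeriv_mul_le_integral_bellman b i j f g hp hpq hT he.1
          (hF.mono' (continuous_bellman_sub f.continuous g.continuous p q he.1).aestronglyMeasurable
            (Eventually.of_forall (hle e he)))
    _ ≤ ∫ x, (bellmanConst q + 1) * (‖f x‖ ^ p + ‖g x‖ ^ q) := by
        refine integral_mono_of_nonneg (Eventually.of_forall fun x => hzero.ge.trans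
          (bellman_zero_le hpq.symm.lt le_rfl _)) ((hfp.add hgq).const_mul _)
          (Eventually.of_forall fun x => (bellman_param_zero_le hpq.pos q _).trans ?_)
        have : 0 ≤ bellmanConst q * ‖f x‖ ^ p := by positivity
        simp only [norm_eq_abs] at this ⊢
        linarith
    _ = _ := by rw [integral_const_mul, integral_add hfp hgq]

lemma le_two_mul_mul_of_forall_le_rpow_add_rpow {I C A B : ℝ} (hp : 0 ≤ p) (hq : 0 ≤ q)
    (hC : 0 ≤ C) (hA : 0 ≤ A) (hB : 0 ≤ B)
    (h : ∀ c > 0, ∀ d > 0, c * d * I ≤ C * ((c * A) ^ p + (d * B) ^ q)) :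
    I ≤ 2 * C * (A * B) := by
  have hδ : ∀ δ ∈ Set.Ioi (0 : ℝ), I ≤ 2 * C * ((A + δ) * (B + δ)) := fun δ (hδ : 0 < δ) => by
    have hone : ∀ {a r : ℝ}, 0 ≤ a → 0 ≤ r → ((a + δ)⁻¹ * a) ^ r ≤ 1 := fun ha hr =>
      rpow_le_one (by positivity) ((inv_mul_le_one₀ (by positivity)).2 (by linarith)) hr
    have hI : (A + δ)⁻¹ * (B + δ)⁻¹ * I ≤ C * (1 + 1) :=
      (h _ (by positivity) _ (by positivity)).trans
        (mul_le_mul_of_nonneg_left (add_le_add (hone hA hp) (hone hB hq)) hC)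
    rw [← mul_inv, inv_mul_le_iff₀ (by positivity)] at hI
    linarith
  have hlim : Tendsto (fun δ => 2 * C * ((A + δ) * (B + δ))) (𝓝[>] 0)
      (𝓝 (2 * C * ((A + 0) * (B + 0)))) :=
    ((by fun_prop : Continuous fun δ => 2 * C * ((A + δ) * (B + δ))).tendsto 0).mono_left
      nhdsWithin_le_nhds
  simpa using ge_of_tendsto hlim (eventually_nhdsWithin_of_forall hδ)

lemma integral_abs_heat_lineDeriv_mul_le_of_two_le (hp : 2 ≤ p) (hpq : p.HolderConjugate q)
    (hT : 0 ≤ T) :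
    ∫ z, |heat z.1 (∂_{b i} f : 𝓢(E, ℝ)) z.2| * |heat z.1 (∂_{b j} g : 𝓢(E, ℝ)) z.2| ∂(slab E T) ≤
      2 * (bellmanConst q + 1) * (lpNorm f (ENNReal.ofReal p) volume *
        lpNorm g (ENNReal.ofReal q) volume) := by
  have hK := bellmanConst_pos hpq.symm.lt
  refine le_two_mul_mul_of_forall_le_rpow_add_rpow hpq.nonneg hpq.symm.nonneg (by positivity)
    lpNorm_nonneg lpNorm_nonneg fun c hc d hd => ?_
  have hscale : ∀ {a r : ℝ}, 0 < a → 0 < r → ∀ h : 𝓢(E, ℝ), ∫ x, ‖(a • h : 𝓢(E, ℝ)) x‖ ^ r =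
      (a * lpNorm h (ENNReal.ofReal r) volume) ^ r := fun {a r} ha hr h => by
    rw [mul_rpow ha.le lpNorm_nonneg, lpNorm_ofReal_rpow h.continuous.aestronglyMeasurable hr,
      ← integral_const_mul]
    simp only [smul_apply, norm_smul, norm_of_nonneg ha.le, mul_rpow ha.le (norm_nonneg _)]
  have hadd := integral_abs_heat_lineDeriv_mul_le_add b i j (c • f) (d • g) hp hpq hT
  rw [hscale hc hpq.pos, hscale hd hpq.symm.pos] at hadd
  simpa only [lineDerivOp_smul, heat_smul, smul_eq_mul, abs_mul, abs_of_pos hc, abs_of_pos hd,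
    mul_mul_mul_comm c, integral_const_mul] using hadd

/-- The bilinear embedding theorem for the heat semigroup. -/
lemma exists_integral_abs_heat_lineDeriv_mul_le (hpq : p.HolderConjugate q) :
    ∃ C : ℝ, 0 ≤ C ∧ ∀ (i j : ι) (f g : 𝓢(E, ℝ)) {T : ℝ}, 0 ≤ T →
      ∫ z, |heat z.1 (∂_{b i} f : 𝓢(E, ℝ)) z.2| * |heat z.1 (∂_{b j} g : 𝓢(E, ℝ)) z.2|
        ∂(slab E T) ≤
      C * (lpNorm f (ENNReal.ofReal p) volume * lpNorm g (ENNReal.ofReal q) volume) := by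
  rcases le_total 2 p with hp | hp
  · have hK := bellmanConst_pos hpq.symm.lt
    exact ⟨2 * (bellmanConst q + 1), by positivity, fun i j f g _ hT =>
      integral_abs_heat_lineDeriv_mul_le_of_two_le b i j f g hp hpq hT⟩
  · have hq : 2 ≤ q := by nlinarith [hpq.mul_eq_add, hpq.lt]
    have hK := bellmanConst_pos hpq.lt
    refine ⟨2 * (bellmanConst p + 1), by positivity, fun i j f g T hT => ?_⟩
    simpa only [mul_comm] using
      integral_abs_heat_lineDeriv_mul_le_of_two_le b j i g f hq hpq.symm hT

end Embedding

section Duality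

lemma norm_toLp_eq_lpNorm {X V : Type*} [MeasurableSpace X] {μ : Measure X} [NormedAddCommGroup V]
    {f : X → V} {p : ENNReal} (hf : MemLp f p μ) : ‖hf.toLp f‖ = lpNorm f p μ := by
  rw [Lp.norm_toLp, toReal_eLpNorm hf.aestronglyMeasurable]

lemma abs_integral_mul_le_of_forall_schwartz {E : Type*} [NormedAddCommGroup E] [NormedSpace ℝ E]
    [FiniteDimensional ℝ E] [MeasurableSpace E] [BorelSpace E] {μ : Measure E}
    [μ.HasTemperateGrowth] [IsFiniteMeasureOnCompacts μ] {p q : ENNReal} [p.HolderConjugate q]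
    (hq : q ≠ ⊤) {f k : E → ℝ} (hf : MemLp f p μ) (hk : MemLp k q μ) {M : ℝ}
    (h : ∀ g : 𝓢(E, ℝ), |∫ x, f x * g x ∂μ| ≤ M * lpNorm g q μ) :
    |∫ x, f x * k x ∂μ| ≤ M * lpNorm k q μ := by
  have := Fact.mk (ENNReal.HolderConjugate.one_le p q)
  have := Fact.mk (ENNReal.HolderConjugate.one_le q p)
  set Λ := ContinuousLinearMap.lpPairing μ p q (ContinuousLinearMap.mul ℝ ℝ) (hf.toLp f)
  have hΛ : ∀ {g : E → ℝ} (hg : MemLp g q μ), Λ (hg.toLp g) = ∫ x, f x * g x ∂μ := fun hg => by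
    rw [ContinuousLinearMap.lpPairing_eq_integral]
    refine integral_congr_ae ?_
    filter_upwards [hf.coeFn_toLp, hg.coeFn_toLp] with x hfx hgx
    simp [hfx, hgx]
  have hbound : ∀ G : Lp ℝ q μ, |Λ G| ≤ M * ‖G‖ := fun G =>
    (denseRange_toLpCLM hq).induction_on G (isClosed_le (by fun_prop) (by fun_prop)) fun g => by
      rw [toLpCLM_apply, SchwartzMap.toLp, hΛ, norm_toLp_eq_lpNorm]
      exact h g
  simpa only [hΛ, norm_toLp_eq_lpNorm] using hbound (hk.toLp k)

variable {p q : ℝ}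

lemma mul_mul_abs_rpow_sub_two (hp : p ≠ 0) (x : ℝ) : x * (x * |x| ^ (p - 2)) = |x| ^ p := by
  rcases eq_or_ne x 0 with rfl | hx
  · simp [hp]
  · rw [← mul_assoc, ← abs_mul_abs_self, ← sq, ← rpow_two, ← rpow_add (abs_pos.2 hx),
      add_sub_cancel]

lemma abs_mul_abs_rpow_sub_two_rpow (hpq : p.HolderConjugate q) (x : ℝ) :
    |x * |x| ^ (p - 2)| ^ q = |x| ^ p := by
  rcases eq_or_ne x 0 with rfl | hx
  · simp [hpq.ne_zero, hpq.symm.ne_zero]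
  · rw [abs_mul, abs_of_nonneg (by positivity : 0 ≤ |x| ^ (p - 2)), ← rpow_one_add' (abs_nonneg x)
      (by linarith [hpq.lt]), ← rpow_mul (abs_nonneg x)]
    congr 1
    linarith [hpq.sub_one_mul_conj]

/-- The extremal function is `k = f |f| ^ (p - 2)`. -/
lemma lpNorm_le_of_forall_abs_integral_mul_le {X : Type*} [MeasurableSpace X] {μ : Measure X}
    (hpq : p.HolderConjugate q) {f : X → ℝ} (hf : MemLp f (ENNReal.ofReal p) μ) {M : ℝ}
    (hM : 0 ≤ M) (h : ∀ k : X → ℝ, MemLp k (ENNReal.ofReal q) μ →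
      |∫ x, f x * k x ∂μ| ≤ M * lpNorm k (ENNReal.ofReal q) μ) :
    lpNorm f (ENNReal.ofReal p) μ ≤ M := by
  set N := lpNorm f (ENNReal.ofReal p) μ
  have hN : 0 ≤ N := lpNorm_nonneg
  have hNp : N ^ p = ∫ x, |f x| ^ p ∂μ := lpNorm_ofReal_rpow hf.aestronglyMeasurable hpq.pos
  set k : X → ℝ := fun x => f x * |f x| ^ (p - 2)
  have hk_meas : AEStronglyMeasurable k μ := (hf.aestronglyMeasurable.aemeasurable.mul
    (hf.aestronglyMeasurable.aemeasurable.abs.pow_const _)).aestronglyMeasurable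
  have hk : MemLp k (ENNReal.ofReal q) μ := by
    rw [← integrable_norm_rpow_iff hk_meas (by simpa using hpq.symm.pos) ENNReal.ofReal_ne_top]
    simpa only [ENNReal.toReal_ofReal hpq.symm.nonneg, ENNReal.toReal_ofReal hpq.nonneg,
      norm_eq_abs, k, abs_mul_abs_rpow_sub_two_rpow hpq] using
      hf.integrable_norm_rpow (by simpa using hpq.pos) ENNReal.ofReal_ne_top
  have hk_norm : lpNorm k (ENNReal.ofReal q) μ = N ^ (p - 1) := by
    rw [← rpow_rpow_inv lpNorm_nonneg hpq.symm.ne_zero, lpNorm_ofReal_rpow hk_meas hpq.symm.pos,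
      ← hpq.div_conj_eq_sub_one, div_eq_mul_inv, rpow_mul hN, hNp]
    simp only [norm_eq_abs, k, abs_mul_abs_rpow_sub_two_rpow hpq]
  have hle : N * N ^ (p - 1) ≤ M * N ^ (p - 1) := calc
    N * N ^ (p - 1) = ∫ x, f x * k x ∂μ := by
      simp only [k, mul_mul_abs_rpow_sub_two hpq.ne_zero]
      rw [← hNp, ← rpow_one_add' hN (by linarith [hpq.lt]), add_sub_cancel]
    _ ≤ _ := (le_abs_self _).trans ((h k hk).trans_eq (by rw [hk_norm]))
  rcases hN.eq_or_lt with hN0 | hN0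
  · exact hN0 ▸ hM
  · exact le_of_mul_le_mul_right hle (rpow_pos_of_pos hN0 _)

end Duality

section Pairing

lemma lineDeriv_lineDeriv_apply {E V : Type*} [NormedAddCommGroup E] [NormedSpace ℝ E]
    [NormedAddCommGroup V] [NormedSpace ℝ V] (f : 𝓢(E, V)) (v w x : E) :
    (∂_{v} (∂_{w} f : 𝓢(E, V)) : 𝓢(E, V)) x = fderiv ℝ (fderiv ℝ f) x v w := by
  have hf : DifferentiableAt ℝ (fderiv ℝ f) x :=
    ((f.smooth 2).fderiv_right (m := 1) (by norm_num)).differentiable one_ne_zero x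
  rw [lineDerivOp_apply_eq_fderiv, funext (lineDerivOp_apply_eq_fderiv w f),
    fderiv_clm_apply hf (differentiableAt_const w)]
  simp

lemma lineDeriv_comm {E V : Type*} [NormedAddCommGroup E] [NormedSpace ℝ E]
    [NormedAddCommGroup V] [NormedSpace ℝ V] (f : 𝓢(E, V)) (v w : E) :
    (∂_{v} (∂_{w} f : 𝓢(E, V)) : 𝓢(E, V)) = ∂_{w} (∂_{v} f : 𝓢(E, V)) := by
  ext1 x
  simpa only [lineDeriv_lineDeriv_apply] using
    (f.smooth 2).contDiffAt.isSymmSndFDerivAt (by simp) v w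

variable {E : Type*} [NormedAddCommGroup E] [InnerProductSpace ℝ E] [FiniteDimensional ℝ E]

lemma laplacian_lineDeriv {V : Type*} [NormedAddCommGroup V] [NormedSpace ℝ V] (f : 𝓢(E, V))
    (v : E) : (Δ (∂_{v} f : 𝓢(E, V)) : 𝓢(E, V)) = ∂_{v} (Δ f : 𝓢(E, V)) := by
  simp only [laplacian_eq_sum (stdOrthonormalBasis ℝ E), lineDerivOp_sum, lineDeriv_comm f _ v,
    lineDeriv_comm (∂_{_} f) _ v]

variable [MeasurableSpace E] [BorelSpace E] {ι : Type*} [Fintype ι] {p q : ℝ}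

lemma integrable_heat_mul_heat (f g : 𝓢(E, ℝ)) (t : ℝ) :
    Integrable fun x => heat t f x * heat t g x :=
  integrable_comp_heat_apply (ContinuousLinearMap.mul ℝ ℝ).continuous f g t

lemma integrable_heat_mul_heat_slab (f g : 𝓢(E, ℝ)) (T : ℝ) :
    Integrable (fun z : ℝ × E => heat z.1 f z.2 * heat z.1 g z.2) (slab E T) :=
  integrable_comp_heat_apply_slab (ContinuousLinearMap.mul ℝ ℝ).continuous f g T

lemma integral_heat_mul_heat_lineDeriv (f g : 𝓢(E, ℝ)) (t : ℝ) (v : E) :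
    ∫ x, heat t f x * heat t (∂_{v} g : 𝓢(E, ℝ)) x =
      -∫ x, heat t (∂_{v} f : 𝓢(E, ℝ)) x * heat t g x := by
  simpa using
    integral_comp_heat_apply_lineDeriv (ContinuousLinearMap.mul ℝ ℝ).contDiff f g t v

lemma integral_heat_mul_heat_laplacian (f g : 𝓢(E, ℝ)) (t : ℝ) :
    ∫ x, heat t f x * heat t (Δ g : 𝓢(E, ℝ)) x =
      ∫ x, heat t (Δ f : 𝓢(E, ℝ)) x * heat t g x := by
  have hfg : ∀ f g : 𝓢(E, ℝ), ∫ x, heat t f x * heat t (Δ g : 𝓢(E, ℝ)) x =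
      -∫ x, ∑ k, heat t (∂_{stdOrthonormalBasis ℝ E k} f : 𝓢(E, ℝ)) x *
        heat t (∂_{stdOrthonormalBasis ℝ E k} g : 𝓢(E, ℝ)) x := fun f g => by
    simpa using integral_comp_heat_apply_laplacian (stdOrthonormalBasis ℝ E)
      (ContinuousLinearMap.mul ℝ ℝ).contDiff f g t
  rw [hfg f g]
  simpa only [mul_comm] using (hfg g f).symm

/-- A Littlewood–Paley identity: a single derivative of `φ` is expressed through `Δφ` alone. -/
lemma integral_lineDeriv_mul_sub_heat (φ g : 𝓢(E, ℝ)) (v : E) {T : ℝ} (hT : 0 ≤ T) :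
    ∫ x, ((∂_{v} φ : 𝓢(E, ℝ)) x * g x - heat T (∂_{v} φ : 𝓢(E, ℝ)) x * heat T g x) =
      ∫ z, heat z.1 (Δ φ : 𝓢(E, ℝ)) z.2 * heat z.1 (∂_{v} g : 𝓢(E, ℝ)) z.2 ∂(slab E T) := by
  have hparts : ∀ t, ∫ x, heat t (Δ (∂_{v} φ : 𝓢(E, ℝ)) : 𝓢(E, ℝ)) x * heat t g x =
      -∫ x, heat t (Δ φ : 𝓢(E, ℝ)) x * heat t (∂_{v} g : 𝓢(E, ℝ)) x := fun t => by
    rw [laplacian_lineDeriv, integral_heat_mul_heat_lineDeriv, neg_neg]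
  have hflow := integral_sub_comp_heat (B := fun z : ℝ × ℝ => z.1 * z.2)
    (contDiff_fst.mul contDiff_snd) (schwartzPair (∂_{v} φ) g) hT
  have hderiv : ∀ z w : ℝ × ℝ, fderiv ℝ (fun z : ℝ × ℝ => z.1 * z.2) z w =
      z.1 * w.2 + w.1 * z.2 := fun z w => by
    rw [fderiv_fun_mul differentiableAt_fst differentiableAt_snd, fderiv_fst, fderiv_snd]
    simp [mul_comm]
  simp only [hderiv, laplacian_schwartzPair, heat_schwartzPair, schwartzPair_apply] at hflow
  rw [hflow, integral_add (integrable_heat_mul_heat_slab _ _ T)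
    (integrable_heat_mul_heat_slab _ _ T), integral_prod _ (integrable_heat_mul_heat_slab _ _ T),
    integral_prod _ (integrable_heat_mul_heat_slab _ _ T),
    integral_prod _ (integrable_heat_mul_heat_slab _ _ T)]
  simp only [integral_heat_mul_heat_laplacian, hparts, integral_neg]
  ring

lemma tendsto_integral_heat_mul_heat [Nontrivial E] (f g : 𝓢(E, ℝ)) :
    Tendsto (fun T => ∫ x, heat T f x * heat T g x) atTop (𝓝 0) := by
  have hdecay : Tendsto (fun T : ℝ => gaussDensity (0 : E) * (∫ y, ‖f y‖) *
      (√T ^ Module.finrank ℝ E)⁻¹ * ∫ y, ‖g y‖) atTop (𝓝 0) := by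
    have hpow := ((tendsto_pow_atTop (Module.finrank_pos (R := ℝ) (M := E)).ne').comp
      tendsto_sqrt_atTop).inv_tendsto_atTop
    simpa using (hpow.const_mul (gaussDensity (0 : E) * ∫ y, ‖f y‖)).mul_const (∫ y, ‖g y‖)
  refine squeeze_zero_norm' ?_ hdecay
  filter_upwards [eventually_gt_atTop 0] with T hT
  have hsup := norm_heat_le_integral f hT
  set M := gaussDensity (0 : E) * (∫ y, ‖f y‖) * (√T ^ Module.finrank ℝ E)⁻¹
  calc ‖∫ x, heat T f x * heat T g x‖ ≤ ∫ x, M * ‖heat T g x‖ :=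
        norm_integral_le_of_norm_le ((integrable_heat g T).norm.const_mul M)
          (Eventually.of_forall fun x => (norm_mul_le _ _).trans
            (mul_le_mul_of_nonneg_right (hsup x) (norm_nonneg _)))
    _ ≤ M * ∫ y, ‖g y‖ := by
        rw [integral_const_mul]
        exact mul_le_mul_of_nonneg_left (integral_norm_heat_le g T) ((norm_nonneg _).trans (hsup 0))

lemma exists_abs_integral_lineDeriv_mul_le (hpq : p.HolderConjugate q)
    (b : OrthonormalBasis ι ℝ E) :
    ∃ C : ℝ, 0 ≤ C ∧ ∀ (φ : 𝓢(E, ℝ)) (v : ι → 𝓢(E, ℝ)), Δ φ = ∑ k, ∂_{b k} (v k) →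
      ∀ (i : ι) (g : 𝓢(E, ℝ)), |∫ x, (∂_{b i} φ : 𝓢(E, ℝ)) x * g x| ≤
        C * (∑ k, lpNorm (v k) (ENNReal.ofReal p) volume) *
          lpNorm g (ENNReal.ofReal q) volume := by
  obtain ⟨C, hC, hembed⟩ := exists_integral_abs_heat_lineDeriv_mul_le b hpq
  refine ⟨C, hC, fun φ v hv i g => ?_⟩
  have : Nontrivial E := ⟨b i, 0, b.orthonormal.ne_zero i⟩
  have h_int := integrable_heat_mul_heat (∂_{b i} φ) g
  have hlim : Tendsto (fun T => |∫ x, ((∂_{b i} φ : 𝓢(E, ℝ)) x * g x -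
      heat T (∂_{b i} φ : 𝓢(E, ℝ)) x * heat T g x)|) atTop
      (𝓝 |∫ x, (∂_{b i} φ : 𝓢(E, ℝ)) x * g x|) := by
    simpa only [← heat_zero (∂_{b i} φ : 𝓢(E, ℝ)), ← heat_zero g,
      integral_sub (h_int 0) (h_int _), sub_zero] using
      ((tendsto_integral_heat_mul_heat (∂_{b i} φ) g).const_sub
        (∫ x, heat 0 (∂_{b i} φ : 𝓢(E, ℝ)) x * heat 0 g x)).abs
  refine le_of_tendsto hlim ((eventually_ge_atTop 0).mono fun T hT => ?_)
  rw [integral_lineDeriv_mul_sub_heat φ g (b i) hT, hv]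
  simp only [heat_sum, Finset.sum_mul]
  rw [integral_finsetSum _ fun k _ => integrable_heat_mul_heat_slab _ _ T, mul_assoc,
    Finset.sum_mul, Finset.mul_sum]
  refine (Finset.abs_sum_le_sum_abs _ _).trans (Finset.sum_le_sum fun k _ =>
    abs_integral_le_integral_abs.trans ?_)
  simpa only [abs_mul] using hembed k i (v k) g hT

theorem exists_lpNorm_lineDeriv_le_sum (hp : 1 < p) (b : OrthonormalBasis ι ℝ E) :
    ∃ C : ℝ, 0 ≤ C ∧ ∀ (φ : 𝓢(E, ℝ)) (v : ι → 𝓢(E, ℝ)), Δ φ = ∑ k, ∂_{b k} (v k) →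
      ∀ i, lpNorm (∂_{b i} φ : 𝓢(E, ℝ)) (ENNReal.ofReal p) volume ≤
        C * ∑ k, lpNorm (v k) (ENNReal.ofReal p) volume := by
  have hpq := Real.HolderConjugate.conjExponent hp
  have := hpq.ennrealOfReal
  obtain ⟨C, hC, hdual⟩ := exists_abs_integral_lineDeriv_mul_le hpq b
  exact ⟨C, hC, fun φ v hv i => lpNorm_le_of_forall_abs_integral_mul_le hpq
    (SchwartzMap.memLp _ _ _) (mul_nonneg hC (Finset.sum_nonneg fun k _ => lpNorm_nonneg))
    fun k hk =>
      abs_integral_mul_le_of_forall_schwartz (p := ENNReal.ofReal p) ENNReal.ofReal_ne_top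
        (SchwartzMap.memLp _ _ _) hk (hdual φ v hv i)⟩

end Pairing

section Gradient

lemma norm_euclideanSpace_le_sum {ι : Type*} [Fintype ι] (a : EuclideanSpace ℝ ι) :
    ‖a‖ ≤ ∑ i, ‖a i‖ := by
  rw [EuclideanSpace.norm_eq]
  exact sqrt_le_iff.2 ⟨by positivity, Finset.sum_sq_le_sq_sum_of_nonneg fun i _ => norm_nonneg _⟩

lemma eLpNorm_euclideanSpace_le_sum {X ι : Type*} [MeasurableSpace X] {μ : Measure X} [Fintype ι]
    {f : X → EuclideanSpace ℝ ι} (hf : AEStronglyMeasurable f μ) {p : ENNReal} (hp : 1 ≤ p) :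
    eLpNorm f p μ ≤ ∑ i, eLpNorm (fun x => f x i) p μ := by
  have hmeas : ∀ i, AEStronglyMeasurable (fun x => ‖f x i‖) μ := fun i =>
    ((EuclideanSpace.proj (𝕜 := ℝ) i).continuous.comp_aestronglyMeasurable hf).norm
  calc eLpNorm f p μ ≤ eLpNorm (∑ i, fun x => ‖f x i‖) p μ :=
        eLpNorm_mono_real fun x => by
          simpa only [Finset.sum_apply] using norm_euclideanSpace_le_sum (f x)
    _ ≤ ∑ i, eLpNorm (fun x => ‖f x i‖) p μ := eLpNorm_sum_le (fun i _ => hmeas i) hp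
    _ = ∑ i, eLpNorm (fun x => f x i) p μ := by simp only [eLpNorm_norm]

lemma continuous_toLp_schwartz {E ι : Type*} [NormedAddCommGroup E] [NormedSpace ℝ E]
    (w : ι → 𝓢(E, ℝ)) : Continuous fun x => WithLp.toLp 2 fun i => w i x :=
  (PiLp.continuous_toLp 2 _).comp (continuous_pi fun i => (w i).continuous)

variable {E : Type*} [NormedAddCommGroup E] [InnerProductSpace ℝ E] [FiniteDimensional ℝ E]
  {ι : Type*} [Fintype ι]

lemma laplacian_eq_sum_of_sum_lineDeriv_eq_zero (b : OrthonormalBasis ι ℝ E) {u : ι → 𝓢(E, ℝ)}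
    (hu : ∑ i, ∂_{b i} (u i) = 0) (j : ι) :
    Δ (u j) = ∑ k, ∂_{b k} (∂_{b k} (u j) - ∂_{b j} (u k) : 𝓢(E, ℝ)) := by
  have hdiv : ∑ k, ∂_{b k} (∂_{b j} (u k) : 𝓢(E, ℝ)) = 0 := by
    simp only [lineDeriv_comm (u _) _ (b j)]
    rw [← lineDerivOp_sum, hu, lineDerivOp_zero]
  simp only [laplacian_eq_sum b, sub_eq_add_neg, lineDerivOp_add, lineDerivOp_neg,
    Finset.sum_add_distrib, Finset.sum_neg_distrib, hdiv, neg_zero, add_zero]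

variable [MeasurableSpace E] [BorelSpace E]

lemma exists_eLpNorm_gradient_le (b : OrthonormalBasis ι ℝ E) {q : ℝ} (hq : 1 < q) :
    ∃ C : ℝ, 0 ≤ C ∧ ∀ (φ : 𝓢(E, ℝ)) (v : ι → 𝓢(E, ℝ)), Δ φ = ∑ k, ∂_{b k} (v k) →
      eLpNorm (fun x => WithLp.toLp 2 fun i => (∂_{b i} φ : 𝓢(E, ℝ)) x) (ENNReal.ofReal q) volume ≤
        ENNReal.ofReal C *
          eLpNorm (fun x => WithLp.toLp 2 fun i => v i x) (ENNReal.ofReal q) volume := by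
  obtain ⟨C, hC, hgrad⟩ := exists_lpNorm_lineDeriv_le_sum hq b
  refine ⟨Fintype.card ι * (C * Fintype.card ι), by positivity, fun φ v hv => ?_⟩
  set Q := ENNReal.ofReal q
  set N := eLpNorm (fun x => WithLp.toLp 2 fun i => v i x) Q volume
  have hcomponent : ∀ i, eLpNorm (∂_{b i} φ : 𝓢(E, ℝ)) Q volume ≤
      ENNReal.ofReal (C * Fintype.card ι) * N := fun i => calc
    eLpNorm (∂_{b i} φ : 𝓢(E, ℝ)) Q volume
      ≤ ENNReal.ofReal (C * ∑ k, lpNorm (v k) Q volume) := by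
        rw [← ofReal_lpNorm (SchwartzMap.memLp _ Q volume)]
        exact ENNReal.ofReal_le_ofReal (hgrad φ v hv i)
    _ = ENNReal.ofReal C * ∑ k, eLpNorm (v k) Q volume := by
        rw [ENNReal.ofReal_mul hC, ENNReal.ofReal_sum_of_nonneg fun k _ => lpNorm_nonneg]
        simp only [ofReal_lpNorm ((v _).memLp Q volume)]
    _ ≤ ENNReal.ofReal C * ∑ _k : ι, N := by
        gcongr with k
        exact eLpNorm_mono fun x => PiLp.norm_apply_le (WithLp.toLp 2 fun i => v i x) k
    _ = ENNReal.ofReal (C * Fintype.card ι) * N := by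
        simp [ENNReal.ofReal_mul hC, mul_assoc]
  calc _ ≤ ∑ i, eLpNorm (∂_{b i} φ : 𝓢(E, ℝ)) Q volume :=
        eLpNorm_euclideanSpace_le_sum (continuous_toLp_schwartz _).aestronglyMeasurable
          (by simpa [Q] using hq.le)
    _ ≤ ∑ _i : ι, ENNReal.ofReal (C * Fintype.card ι) * N :=
        Finset.sum_le_sum fun i _ => hcomponent i
    _ = ENNReal.ofReal (Fintype.card ι * (C * Fintype.card ι)) * N := by
        simp [ENNReal.ofReal_mul (Nat.cast_nonneg (Fintype.card ι)), mul_assoc]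

theorem grad_add_d3_le_e3_cross_vort_general (b : OrthonormalBasis ι ℝ E) {q : ℝ} (hq : 1 < q) :
    ∃ C : ℝ, 0 < C ∧ ∀ u : ι → 𝓢(E, ℝ), ∑ i, ∂_{b i} (u i) = 0 → ∀ j,
      eLpNorm (fun x => WithLp.toLp 2 fun i => (∂_{b i} (u j) : 𝓢(E, ℝ)) x)
          (ENNReal.ofReal q) volume +
        eLpNorm (fun x => WithLp.toLp 2 fun i => (∂_{b j} (u i) : 𝓢(E, ℝ)) x)
          (ENNReal.ofReal q) volume ≤
      ENNReal.ofReal C *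
        eLpNorm (fun x => WithLp.toLp 2 fun i =>
          (∂_{b i} (u j) - ∂_{b j} (u i) : 𝓢(E, ℝ)) x) (ENNReal.ofReal q) volume := by
  obtain ⟨C, hC, hgrad⟩ := exists_eLpNorm_gradient_le b hq
  refine ⟨2 * C + 1, by positivity, fun u hu j => ?_⟩
  have hle := hgrad (u j) _ (laplacian_eq_sum_of_sum_lineDeriv_eq_zero b hu j)
  set A := fun x => WithLp.toLp 2 fun i => (∂_{b i} (u j) : 𝓢(E, ℝ)) x
  set V := fun x => WithLp.toLp 2 fun i => (∂_{b i} (u j) - ∂_{b j} (u i) : 𝓢(E, ℝ)) x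
  have hsub : (fun x => WithLp.toLp 2 fun i => (∂_{b j} (u i) : 𝓢(E, ℝ)) x) = A - V := by
    ext x i
    simp [A, V]
  rw [hsub]
  calc eLpNorm A (ENNReal.ofReal q) volume + eLpNorm (A - V) (ENNReal.ofReal q) volume
      ≤ eLpNorm A (ENNReal.ofReal q) volume +
        (eLpNorm A (ENNReal.ofReal q) volume + eLpNorm V (ENNReal.ofReal q) volume) := by
        gcongr
        exact eLpNorm_sub_le (continuous_toLp_schwartz _).aestronglyMeasurable
          (continuous_toLp_schwartz _).aestronglyMeasurable (by simpa using hq.le)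
    _ ≤ ENNReal.ofReal C * eLpNorm V (ENNReal.ofReal q) volume + (ENNReal.ofReal C *
          eLpNorm V (ENNReal.ofReal q) volume + eLpNorm V (ENNReal.ofReal q) volume) := by gcongr
    _ = ENNReal.ofReal (2 * C + 1) * eLpNorm V (ENNReal.ofReal q) volume := by
        rw [ENNReal.ofReal_add (by positivity) one_pos.le, ENNReal.ofReal_mul two_pos.le,
          ENNReal.ofReal_one, ENNReal.ofReal_ofNat]
        ring

end Gradient

lemma pdW_eq_lineDeriv (u : Fin 3 → 𝓢(EuclideanSpace ℝ (Fin 3), ℝ)) (i j : Fin 3)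
    (x : EuclideanSpace ℝ (Fin 3)) :
    pdW u i j x = (∂_{EuclideanSpace.basisFun (Fin 3) ℝ i} (u j) :
      𝓢(EuclideanSpace ℝ (Fin 3), ℝ)) x := by
  rw [lineDerivOp_apply_eq_fderiv, EuclideanSpace.basisFun_apply, pdW, ee]

lemma cross_vortW (u : Fin 3 → 𝓢(EuclideanSpace ℝ (Fin 3), ℝ)) (x : EuclideanSpace ℝ (Fin 3)) :
    cross ![0, 0, 1] (vortW u x) = fun k => pdW u k 2 x - pdW u 2 k x := by
  funext k
  fin_cases k <;> simp [cross, vortW]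

/-- For every `1 < q < ∞` there is a constant `C_q > 0` such that for
every divergence-free Schwartz vector field `u : ℝ³ → ℝ³` with vorticity `ω = ∇ × u`,
`‖∇u₃‖_{L^q} + ‖∂₃u‖_{L^q} ≤ C_q ‖e₃ × ω‖_{L^q}`. -/
theorem grad_add_d3_le_e3_cross_vort (q : ℝ) (hq1 : 1 < q) :
    ∃ C : ℝ, 0 < C ∧
      ∀ u : Fin 3 → SchwartzMap (EuclideanSpace ℝ (Fin 3)) ℝ,
        (∀ x, ∑ i, pdW u i i x = 0) →
        eLpNorm (fun x => toE3 fun i => pdW u i 2 x) (ENNReal.ofReal q) volume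
            + eLpNorm (fun x => toE3 fun i => pdW u 2 i x) (ENNReal.ofReal q) volume
          ≤ ENNReal.ofReal C *
              eLpNorm (fun x => toE3 (cross ![0, 0, 1] (vortW u x)))
                (ENNReal.ofReal q) volume := by
  obtain ⟨C, hC, hle⟩ :=
    grad_add_d3_le_e3_cross_vort_general (EuclideanSpace.basisFun (Fin 3) ℝ) hq1
  refine ⟨C, hC, fun u hdiv => ?_⟩
  simp only [cross_vortW, pdW_eq_lineDeriv] at hdiv ⊢
  exact hle u (SchwartzMap.ext fun x => by simpa [sum_apply] using hdiv x) 2
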